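/- arXiv:1005.3979 — 3 statements merged into one kernel-verified Lean document; each statement's English description precedes it below -/
import Mathlib

section
/- Let (C, □, 0, η) be a directed monoidal category with a strict unit: □ : C × C → C is a bifunctor, 0 is an object of C which is a strict unit for □ (the restrictions of □ to 0 × C and C × 0 are the identity functor), and η_{A,B,C} : (A □ B) □ C ⟶ A □ (B □ C) is a natural transformation (not necessarily an isomorphism) which is the identity whenever one of A, B, C is 0 and which satisfies the pentagon identity: η_{A,B,C□D} ∘ η_{A□B,C,D} = (id_A □ η_{B,C,D}) ∘ η_{A,B□C,D} ∘ (η_{A,B,C} □ id_D). Then C can be endowed with the structure of an A_∞-monoidal category in which μ₀ = 0, μ₂ = □, and the associator α^{0,2,1}_{(A,B),C} : μ₂(μ₂(A,B),C) → μ₃(A,B,C) equals η_{A,B,C}. -/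
/-!
The multiplications are the right-normed products
`μ_k (x₁, …, xₖ) = x₁ □ (x₂ □ (⋯ □ (xₖ □ 0)))`, where the innermost `□ 0` is harmless because
`0` is a strict unit. Since `η` moves parentheses to the right, it induces a comparison
`φ_{B,D} : ∏ B □ ∏ D ⟶ ∏ (B ++ D)` by recursion on `B`: `φ_{x::B,D}` is `η_{x,∏B,∏D}` followed by
`x □ φ_{B,D}`. The associator `α^{A,B,D}` is `φ_{B,D}` whiskered on the left by the entries of `A`.

With these definitions each axiom follows by induction on lists. The unit conditions hold
because `η` is the identity when one argument is `0` and whiskering by `0` is the identity. The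
square for disjoint multiplications (`al_disjoint`) is naturality of `φ` in its second factor
(`phi_al`). The square for nested multiplications (`al_nested`) reduces, by naturality of `η`, to
the pentagon for `φ` (`phi_phi`), which comes from the pentagon for `η`.

Products and associators are defined on lists, where concatenation with a nonempty list on the
left unfolds definitionally, and are then transported to tuples. Morphisms between propositionally
equal products are compared through `Arrow C`, where transports disappear.
-/

open CategoryTheory

universe v u

section Tuples

variable {C : Type u} [Category.{v} C]

/-- The empty tuple of objects. -/
def emp : Fin 0 → C := fun i => i.elim0

/-- A one-element tuple of objects. -/
def sgl (X : C) : Fin 1 → C := fun _ => X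

/-- A one-element family of morphisms. -/
def hsgl {X Y : C} (f : X ⟶ Y) : ∀ i : Fin 1, sgl X i ⟶ sgl Y i := fun _ => f

/-- The identity family of morphisms. -/
def hid {k : ℕ} (A : Fin k → C) : ∀ i, A i ⟶ A i := fun i => 𝟙 (A i)

/-- Concatenation of tuples of objects. -/
def app {a b : ℕ} (A : Fin a → C) (B : Fin b → C) : Fin (a + b) → C :=
  fun i => if h : (i : ℕ) < a then A ⟨i, h⟩ else B ⟨(i : ℕ) - a, by have := i.isLt; omega⟩

/-- Concatenation of families of morphisms. -/
def happ {a b : ℕ} {A A' : Fin a → C} {B B' : Fin b → C}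
    (f : ∀ i, A i ⟶ A' i) (g : ∀ j, B j ⟶ B' j) :
    ∀ l, app A B l ⟶ app A' B' l := fun l =>
  if h : (l : ℕ) < a then
    eqToHom (by simp [app, h]) ≫ f ⟨l, h⟩ ≫ eqToHom (by simp [app, h])
  else
    eqToHom (by simp [app, h]) ≫ g ⟨(l : ℕ) - a, by have := l.isLt; omega⟩ ≫
      eqToHom (by simp [app, h])

/-- Concatenation of three tuples of objects. -/
def tri {a b c : ℕ} (A : Fin a → C) (B : Fin b → C) (D : Fin c → C) :
    Fin (a + b + c) → C := app (app A B) D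

/-- Concatenation of three families of morphisms. -/
def htri {a b c : ℕ} {A A' : Fin a → C} {B B' : Fin b → C} {D D' : Fin c → C}
    (f : ∀ i, A i ⟶ A' i) (g : ∀ i, B i ⟶ B' i) (h : ∀ i, D i ⟶ D' i) :
    ∀ l, tri A B D l ⟶ tri A' B' D' l := happ (happ f g) h

/-- A two-element tuple of objects. -/
def pair (X Y : C) : Fin 2 → C
  | ⟨0, _⟩ => X
  | ⟨_ + 1, _⟩ => Y

/-- A two-element family of morphisms. -/
def pairHom {X X' Y Y' : C} (f : X ⟶ X') (g : Y ⟶ Y') :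
    ∀ i, pair X Y i ⟶ pair X' Y' i
  | ⟨0, _⟩ => f
  | ⟨_ + 1, _⟩ => g

end Tuples

/-- `k` is an admissible arity for an `A_n` structure: `k < n + 1`. -/
def Ok (n : ℕ∞) (k : ℕ) : Prop := (k : ℕ∞) < n + 1

/-- An `A_n`-monoidal category structure (Definition 2.1 of the paper) on a category
`C`, for `2 ≤ n ≤ ∞`: multiplication functors `μ_k : C^k → C` for `0 ≤ k < n + 1`
with `μ₁` the identity and `μ₀` a strict unit `0`, together with associators
`α^{a,b,c} : μ_{a+1+c} ∘ (Id^a × μ_b × Id^c) ⟶ μ_{a+b+c}` satisfying the unit and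
coherence conditions (i)–(vi).  (All identifications of objects forced by the strict
unit and by regrouping of tuples are recorded by universally quantified equality
proofs `e` and the corresponding `eqToHom`s.) -/
structure AMonCat (C : Type u) [Category.{v} C] (n : ℕ∞) : Type (max u v) where
  /-- the multiplication `μ_k` on objects -/
  μObj : ∀ (k : ℕ), Ok n k → (Fin k → C) → C
  /-- the multiplication `μ_k` on morphisms -/
  μMap : ∀ (k : ℕ) (hk : Ok n k) {A B : Fin k → C},
    (∀ i, A i ⟶ B i) → (μObj k hk A ⟶ μObj k hk B)
  /-- `μ_k` is functorial: identities -/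
  μMap_id : ∀ (k : ℕ) (hk : Ok n k) (A : Fin k → C),
    μMap k hk (hid A) = 𝟙 (μObj k hk A)
  /-- `μ_k` is functorial: composition -/
  μMap_comp : ∀ (k : ℕ) (hk : Ok n k) {A B D : Fin k → C}
    (f : ∀ i, A i ⟶ B i) (g : ∀ i, B i ⟶ D i),
    μMap k hk (fun i => f i ≫ g i) = μMap k hk f ≫ μMap k hk g
  /-- (1) `μ₁` is the identity functor, on objects -/
  one_obj : ∀ (h1 : Ok n 1) (A : Fin 1 → C), μObj 1 h1 A = A 0
  /-- (1) `μ₁` is the identity functor, on morphisms -/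
  one_map : ∀ (h1 : Ok n 1) {A B : Fin 1 → C} (f : ∀ i, A i ⟶ B i),
    μMap 1 h1 f = eqToHom (one_obj h1 A) ≫ f 0 ≫ eqToHom (one_obj h1 B).symm
  /-- (2) `μ₀ = 0` is a strict unit: `μ_k ∘ (Id^i × 0 × Id^j) = μ_{k-1}`, on objects -/
  unit_obj : ∀ (i j : ℕ) (hij1 : Ok n (i + 1 + j)) (hij : Ok n (i + j)) (h0 : Ok n 0)
    (A : Fin i → C) (B : Fin j → C),
    μObj (i + 1 + j) hij1 (tri A (sgl (μObj 0 h0 emp)) B) = μObj (i + j) hij (app A B)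
  /-- (2) the strict unit condition on morphisms -/
  unit_map : ∀ (i j : ℕ) (hij1 : Ok n (i + 1 + j)) (hij : Ok n (i + j)) (h0 : Ok n 0)
    {A A' : Fin i → C} {B B' : Fin j → C}
    (f : ∀ l, A l ⟶ A' l) (g : ∀ l, B l ⟶ B' l),
    μMap (i + 1 + j) hij1 (htri f (hsgl (𝟙 (μObj 0 h0 emp))) g) =
      eqToHom (unit_obj i j hij1 hij h0 A B) ≫ μMap (i + j) hij (happ f g) ≫
        eqToHom (unit_obj i j hij1 hij h0 A' B').symm
  /-- the associators `α^{a,b,c}` -/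
  assoc : ∀ (a b c : ℕ) (h : Ok n (a + b + c)) (h1 : Ok n (a + 1 + c)) (hb : Ok n b)
    (A : Fin a → C) (B : Fin b → C) (D : Fin c → C),
    μObj (a + 1 + c) h1 (tri A (sgl (μObj b hb B)) D) ⟶ μObj (a + b + c) h (tri A B D)
  /-- naturality of the associators -/
  assoc_natural : ∀ (a b c : ℕ) (h : Ok n (a + b + c)) (h1 : Ok n (a + 1 + c))
    (hb : Ok n b) {A A' : Fin a → C} {B B' : Fin b → C} {D D' : Fin c → C}
    (f : ∀ i, A i ⟶ A' i) (g : ∀ i, B i ⟶ B' i) (k : ∀ i, D i ⟶ D' i),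
    μMap (a + 1 + c) h1 (htri f (hsgl (μMap b hb g)) k) ≫ assoc a b c h h1 hb A' B' D' =
      assoc a b c h h1 hb A B D ≫ μMap (a + b + c) h (htri f g k)
  /-- (i) `α^{a,0,c}` is the identity -/
  assoc_zero : ∀ (a c : ℕ) (h : Ok n (a + 0 + c)) (h1 : Ok n (a + 1 + c)) (h0 : Ok n 0)
    (A : Fin a → C) (D : Fin c → C)
    (e : μObj (a + 1 + c) h1 (tri A (sgl (μObj 0 h0 emp)) D) =
      μObj (a + 0 + c) h (tri A emp D)),
    assoc a 0 c h h1 h0 A emp D = eqToHom e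
  /-- (i) `α^{a,1,c}` is the identity -/
  assoc_one : ∀ (a c : ℕ) (h : Ok n (a + 1 + c)) (h1 : Ok n (a + 1 + c)) (hone : Ok n 1)
    (A : Fin a → C) (B : Fin 1 → C) (D : Fin c → C)
    (e : μObj (a + 1 + c) h1 (tri A (sgl (μObj 1 hone B)) D) =
      μObj (a + 1 + c) h (tri A B D)),
    assoc a 1 c h h1 hone A B D = eqToHom e
  /-- (i) `α^{0,b,0}` is the identity -/
  assoc_mid : ∀ (b : ℕ) (h : Ok n (0 + b + 0)) (h1 : Ok n (0 + 1 + 0)) (hb : Ok n b)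
    (B : Fin b → C)
    (e : μObj (0 + 1 + 0) h1 (tri emp (sgl (μObj b hb B)) emp) =
      μObj (0 + b + 0) h (tri emp B emp)),
    assoc 0 b 0 h h1 hb emp B emp = eqToHom e
  /-- (ii) compatibility of the associators with a unit inserted in the left outer slot -/
  cond_ii : ∀ (a b c d : ℕ) (h : Ok n (a + 1 + b + c + d)) (h1 : Ok n (a + 1 + b + 1 + d))
    (h' : Ok n (a + b + c + d)) (h1' : Ok n (a + b + 1 + d)) (hc : Ok n c) (h0 : Ok n 0)
    (A : Fin a → C) (B : Fin b → C) (Cc : Fin c → C) (D : Fin d → C)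
    (e₁ : μObj (a + 1 + b + 1 + d) h1
        (tri (tri A (sgl (μObj 0 h0 emp)) B) (sgl (μObj c hc Cc)) D) =
      μObj (a + b + 1 + d) h1' (tri (app A B) (sgl (μObj c hc Cc)) D))
    (e₂ : μObj (a + 1 + b + c + d) h (tri (tri A (sgl (μObj 0 h0 emp)) B) Cc D) =
      μObj (a + b + c + d) h' (tri (app A B) Cc D)),
    assoc (a + 1 + b) c d h h1 hc (tri A (sgl (μObj 0 h0 emp)) B) Cc D ≫ eqToHom e₂ =
      eqToHom e₁ ≫ assoc (a + b) c d h' h1' hc (app A B) Cc D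
  /-- (iii) compatibility of the associators with a unit inserted in the right outer slot -/
  cond_iii : ∀ (a b c d : ℕ) (h : Ok n (a + b + (c + 1 + d))) (h1 : Ok n (a + 1 + (c + 1 + d)))
    (h' : Ok n (a + b + (c + d))) (h1' : Ok n (a + 1 + (c + d))) (hb : Ok n b) (h0 : Ok n 0)
    (A : Fin a → C) (B : Fin b → C) (Cc : Fin c → C) (D : Fin d → C)
    (e₁ : μObj (a + 1 + (c + 1 + d)) h1
        (tri A (sgl (μObj b hb B)) (tri Cc (sgl (μObj 0 h0 emp)) D)) =
      μObj (a + 1 + (c + d)) h1' (tri A (sgl (μObj b hb B)) (app Cc D)))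
    (e₂ : μObj (a + b + (c + 1 + d)) h (tri A B (tri Cc (sgl (μObj 0 h0 emp)) D)) =
      μObj (a + b + (c + d)) h' (tri A B (app Cc D))),
    assoc a b (c + 1 + d) h h1 hb A B (tri Cc (sgl (μObj 0 h0 emp)) D) ≫ eqToHom e₂ =
      eqToHom e₁ ≫ assoc a b (c + d) h' h1' hb A B (app Cc D)
  /-- (iv) compatibility of the associators with a unit inserted in the inner multiplication -/
  cond_iv : ∀ (a b c d : ℕ) (h : Ok n (a + (b + 1 + c) + d)) (h1 : Ok n (a + 1 + d))
    (h' : Ok n (a + (b + c) + d)) (hbc1 : Ok n (b + 1 + c)) (hbc : Ok n (b + c)) (h0 : Ok n 0)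
    (A : Fin a → C) (B : Fin b → C) (Cc : Fin c → C) (D : Fin d → C)
    (e₁ : μObj (a + 1 + d) h1
        (tri A (sgl (μObj (b + 1 + c) hbc1 (tri B (sgl (μObj 0 h0 emp)) Cc))) D) =
      μObj (a + 1 + d) h1 (tri A (sgl (μObj (b + c) hbc (app B Cc))) D))
    (e₂ : μObj (a + (b + 1 + c) + d) h (tri A (tri B (sgl (μObj 0 h0 emp)) Cc) D) =
      μObj (a + (b + c) + d) h' (tri A (app B Cc) D)),
    assoc a (b + 1 + c) d h h1 hbc1 A (tri B (sgl (μObj 0 h0 emp)) Cc) D ≫ eqToHom e₂ =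
      eqToHom e₁ ≫ assoc a (b + c) d h' h1 hbc A (app B Cc) D
  /-- (v) the square for two disjoint inner multiplications commutes -/
  cond_v : ∀ (a b c d e : ℕ)
    (hb : Ok n b) (hd : Ok n d)
    (hT : Ok n (a + b + (c + d + e)))
    (h₁ : Ok n (a + b + (c + 1 + e))) (h₂ : Ok n (a + 1 + (c + 1 + e)))
    (h₃ : Ok n (a + b + c + d + e)) (h₄ : Ok n (a + b + c + 1 + e))
    (h₅ : Ok n (a + 1 + c + d + e)) (h₆ : Ok n (a + 1 + c + 1 + e))
    (h₇ : Ok n (a + 1 + (c + d + e)))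
    (A : Fin a → C) (B : Fin b → C) (Cc : Fin c → C) (D : Fin d → C) (E : Fin e → C)
    (e₀ : μObj (a + 1 + (c + 1 + e)) h₂
        (tri A (sgl (μObj b hb B)) (tri Cc (sgl (μObj d hd D)) E)) =
      μObj (a + 1 + c + 1 + e) h₆
        (tri (tri A (sgl (μObj b hb B)) Cc) (sgl (μObj d hd D)) E))
    (e₁ : μObj (a + b + (c + 1 + e)) h₁ (tri A B (tri Cc (sgl (μObj d hd D)) E)) =
      μObj (a + b + c + 1 + e) h₄ (tri (tri A B Cc) (sgl (μObj d hd D)) E))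
    (e₂ : μObj (a + 1 + c + d + e) h₅ (tri (tri A (sgl (μObj b hb B)) Cc) D E) =
      μObj (a + 1 + (c + d + e)) h₇ (tri A (sgl (μObj b hb B)) (tri Cc D E)))
    (e₃ : μObj (a + b + c + d + e) h₃ (tri (tri A B Cc) D E) =
      μObj (a + b + (c + d + e)) hT (tri A B (tri Cc D E))),
    assoc a b (c + 1 + e) h₁ h₂ hb A B (tri Cc (sgl (μObj d hd D)) E) ≫ eqToHom e₁ ≫
        assoc (a + b + c) d e h₃ h₄ hd (tri A B Cc) D E ≫ eqToHom e₃ =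
      eqToHom e₀ ≫ assoc (a + 1 + c) d e h₅ h₆ hd (tri A (sgl (μObj b hb B)) Cc) D E ≫
        eqToHom e₂ ≫ assoc a b (c + d + e) hT h₇ hb A B (tri Cc D E)
  /-- (vi) the square for a nested inner multiplication commutes -/
  cond_vi : ∀ (a b c d e : ℕ)
    (hc : Ok n c) (hb1d : Ok n (b + 1 + d)) (hbcd : Ok n (b + c + d))
    (hA1E : Ok n (a + 1 + e)) (hL : Ok n (a + (b + 1 + d) + e))
    (hT : Ok n (a + (b + c + d) + e))
    (hM1 : Ok n (a + b + 1 + (d + e))) (hM : Ok n (a + b + c + (d + e)))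
    (A : Fin a → C) (B : Fin b → C) (Cc : Fin c → C) (D : Fin d → C) (E : Fin e → C)
    (e₁ : μObj (a + (b + 1 + d) + e) hL (tri A (tri B (sgl (μObj c hc Cc)) D) E) =
      μObj (a + b + 1 + (d + e)) hM1 (tri (app A B) (sgl (μObj c hc Cc)) (app D E)))
    (e₂ : μObj (a + b + c + (d + e)) hM (tri (app A B) Cc (app D E)) =
      μObj (a + (b + c + d) + e) hT (tri A (tri B Cc D) E)),
    μMap (a + 1 + e) hA1E (htri (hid A) (hsgl (assoc b c d hbcd hb1d hc B Cc D)) (hid E)) ≫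
        assoc a (b + c + d) e hT hA1E hbcd A (tri B Cc D) E =
      assoc a (b + 1 + d) e hL hA1E hb1d A (tri B (sgl (μObj c hc Cc)) D) E ≫ eqToHom e₁ ≫
        assoc (a + b) c (d + e) hM hM1 hc (app A B) Cc (app D E) ≫ eqToHom e₂

/-! ### Directed monoidal categories -/

/-- A directed monoidal category with a strict unit, bundled: the data and laws that are
the hypotheses of the theorem. -/
structure DirMon (C : Type u) [Category.{v} C] where
  box : C → C → C
  boxMap : ∀ {X X' Y Y' : C}, (X ⟶ X') → (Y ⟶ Y') → (box X Y ⟶ box X' Y')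
  boxMap_id : ∀ X Y : C, boxMap (𝟙 X) (𝟙 Y) = 𝟙 (box X Y)
  boxMap_comp : ∀ {X X' X'' Y Y' Y'' : C}
      (f : X ⟶ X') (f' : X' ⟶ X'') (g : Y ⟶ Y') (g' : Y' ⟶ Y''),
      boxMap (f ≫ f') (g ≫ g') = boxMap f g ≫ boxMap f' g'
  zero : C
  zero_left_obj : ∀ X : C, box zero X = X
  zero_right_obj : ∀ X : C, box X zero = X
  zero_left_map : ∀ {X Y : C} (f : X ⟶ Y),
      boxMap (𝟙 zero) f = eqToHom (zero_left_obj X) ≫ f ≫ eqToHom (zero_left_obj Y).symm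
  zero_right_map : ∀ {X Y : C} (f : X ⟶ Y),
      boxMap f (𝟙 zero) = eqToHom (zero_right_obj X) ≫ f ≫ eqToHom (zero_right_obj Y).symm
  η : ∀ X Y Z : C, box (box X Y) Z ⟶ box X (box Y Z)
  η_natural : ∀ {X X' Y Y' Z Z' : C} (f : X ⟶ X') (g : Y ⟶ Y') (h : Z ⟶ Z'),
      boxMap (boxMap f g) h ≫ η X' Y' Z' = η X Y Z ≫ boxMap f (boxMap g h)
  η_zero_left : ∀ (Y Z : C) (e : box (box zero Y) Z = box zero (box Y Z)),
      η zero Y Z = eqToHom e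
  η_zero_mid : ∀ (X Z : C) (e : box (box X zero) Z = box X (box zero Z)),
      η X zero Z = eqToHom e
  η_zero_right : ∀ (X Y : C) (e : box (box X Y) zero = box X (box Y zero)),
      η X Y zero = eqToHom e
  pentagon : ∀ W X Y Z : C,
      η (box W X) Y Z ≫ η W X (box Y Z) =
        boxMap (η W X Y) (𝟙 Z) ≫ η W (box X Y) Z ≫ boxMap (𝟙 W) (η X Y Z)

/-! ### Tuples and lists -/

section Lists

/-- The list of entries of a tuple; unlike `List.ofFn` it unfolds definitionally along the
length, which keeps casts out of the recursive definitions below. -/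
def lst {α : Type*} : (k : ℕ) → (Fin k → α) → List α
  | 0, _ => []
  | k + 1, A => A 0 :: lst k (fun i => A i.succ)

theorem lst_eq_ofFn {α : Type*} (k : ℕ) (A : Fin k → α) : lst k A = List.ofFn A := by
  induction k with
  | zero => simp [lst]
  | succ k ih => simp [lst, ih, List.ofFn_succ]

theorem lst_app {α : Type*} {a b : ℕ} (A : Fin a → α) (B : Fin b → α) :
    lst (a + b) (app A B) = lst a A ++ lst b B := by
  simp only [lst_eq_ofFn]
  apply List.ext_getElem
  · simp
  · intro i h1 h2
    simp [app, List.getElem_append]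

theorem lst_tri {α : Type*} {a b c : ℕ} (A : Fin a → α) (B : Fin b → α) (D : Fin c → α) :
    lst (a + b + c) (tri A B D) = lst a A ++ (lst b B ++ lst c D) := by
  simp [tri, lst_app]

theorem lst_tri_sgl {α : Type*} {a c : ℕ} (A : Fin a → α) (X : α) (D : Fin c → α) :
    lst (a + 1 + c) (tri A (sgl X) D) = lst a A ++ X :: lst c D := by
  rw [lst_tri]; rfl

variable {C : Type u} [Category.{v} C]

/-- Morphisms of lists of objects: lists of morphisms with matching sources and targets. -/
inductive LHom : List C → List C → Type (max u v)
  | nil : LHom [] []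
  | cons {x y : C} {l m : List C} (f : x ⟶ y) (t : LHom l m) : LHom (x :: l) (y :: m)

namespace LHom

/-- Concatenation of morphisms of lists. -/
def append : {l m l' m' : List C} → LHom l m → LHom l' m' → LHom (l ++ l') (m ++ m')
  | _, _, _, _, nil, g => g
  | _, _, _, _, cons f t, g => cons f (append t g)

/-- The identity morphism of a list. -/
def idl : (l : List C) → LHom l l
  | [] => nil
  | x :: l => cons (𝟙 x) (idl l)

/-- The underlying list of arrows. It determines the morphism, and it lets morphisms between
propositionally equal lists be compared without casts. -/
def toArr : {l m : List C} → LHom l m → List (Arrow C)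
  | _, _, nil => []
  | _, _, cons f t => Arrow.mk f :: toArr t

theorem toArr_append {l m l' m' : List C} (f : LHom l m) (g : LHom l' m') :
    toArr (append f g) = toArr f ++ toArr g := by
  induction f with
  | nil => rfl
  | cons f t ih => simp [append, toArr, ih]

/-- A family of morphisms between tuples, as a morphism of lists. -/
def ofFam : (k : ℕ) → {A B : Fin k → C} → (∀ i, A i ⟶ B i) → LHom (lst k A) (lst k B)
  | 0, _, _, _ => nil
  | k + 1, _, _, f => cons (f 0) (ofFam k (fun i => f i.succ))

theorem toArr_ofFam (k : ℕ) {A B : Fin k → C} (f : ∀ i, A i ⟶ B i) :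
    toArr (ofFam k f) = lst k (fun i => Arrow.mk (f i)) := by
  induction k with
  | zero => rfl
  | succ k ih => simp [ofFam, toArr, lst, ih]

theorem ofFam_hid (k : ℕ) (A : Fin k → C) : ofFam k (hid A) = idl (lst k A) := by
  induction k with
  | zero => rfl
  | succ k ih =>
    have := ih (fun i => A i.succ)
    simp only [ofFam, lst, idl]
    rw [← this]; rfl

end LHom

theorem arrow_conj {X Y X' Y' : C} (e : X = X') (f : X' ⟶ Y') (e' : Y' = Y) :
    Arrow.mk (eqToHom e ≫ f ≫ eqToHom e') = Arrow.mk f := by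
  subst e e'; simp

theorem eq_conj_of_arrow {X Y X' Y' : C} {f : X ⟶ Y} {g : X' ⟶ Y'}
    (h : Arrow.mk f = Arrow.mk g) (e : X = X') (e' : Y' = Y) :
    f = eqToHom e ≫ g ≫ eqToHom e' := by
  subst e e'
  simpa using (Arrow.mk_inj _ _).1 h

theorem conj_eqToHom {X Y X' Y' : C} {f : X ⟶ Y} {e : X = Y} (h : f = eqToHom e)
    (p : X' = X) (q : Y = Y') (r : X' = Y') : eqToHom p ≫ f ≫ eqToHom q = eqToHom r := by
  subst h e p q; simp

theorem conj_conj {X Y X' Y' P Q P' Q' : C} {f : X ⟶ Y} {g : X' ⟶ Y'}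
    {a : X = X'} {b : Y' = Y} (h : f = eqToHom a ≫ g ≫ eqToHom b)
    (c : P = X) (d : Y = Q) (p : P = P') (q : Q' = Q) (r : P' = X') (s : Y' = Q') :
    eqToHom c ≫ f ≫ eqToHom d =
      eqToHom p ≫ (eqToHom r ≫ g ≫ eqToHom s) ≫ eqToHom q := by
  subst a b c d p s; simp [h]

/-- The transports in the definition of `happ` are invisible on underlying arrows. -/
theorem arrow_happ {a b : ℕ} {A A' : Fin a → C} {B B' : Fin b → C}
    (f : ∀ i, A i ⟶ A' i) (g : ∀ j, B j ⟶ B' j) :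
    (fun l => Arrow.mk (happ f g l)) =
      app (fun i => Arrow.mk (f i)) (fun j => Arrow.mk (g j)) := by
  funext l
  by_cases h : (l : ℕ) < a
  · simp only [happ, app, h, dite_true]
    exact arrow_conj _ _ _
  · simp only [happ, app, h, dite_false]
    exact arrow_conj _ _ _

theorem toArr_happ {a b : ℕ} {A A' : Fin a → C} {B B' : Fin b → C}
    (f : ∀ i, A i ⟶ A' i) (g : ∀ j, B j ⟶ B' j) :
    (LHom.ofFam _ (happ f g)).toArr = (LHom.ofFam _ f).toArr ++ (LHom.ofFam _ g).toArr := by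
  simp only [LHom.toArr_ofFam, arrow_happ, lst_app]

theorem toArr_htri {a b c : ℕ} {A A' : Fin a → C} {B B' : Fin b → C} {D D' : Fin c → C}
    (f : ∀ i, A i ⟶ A' i) (g : ∀ j, B j ⟶ B' j) (h : ∀ j, D j ⟶ D' j) :
    (LHom.ofFam _ (htri f g h)).toArr =
      ((LHom.ofFam _ f).append ((LHom.ofFam _ g).append (LHom.ofFam _ h))).toArr := by
  rw [LHom.toArr_append, LHom.toArr_append, ← List.append_assoc, ← toArr_happ f g]
  exact toArr_happ _ _

theorem toArr_htri_sgl {a c : ℕ} {A A' : Fin a → C} {X Y : C} {D D' : Fin c → C}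
    (f : ∀ i, A i ⟶ A' i) (g : X ⟶ Y) (h : ∀ j, D j ⟶ D' j) :
    (LHom.ofFam _ (htri f (hsgl g) h)).toArr =
      ((LHom.ofFam _ f).append (.cons g (LHom.ofFam _ h))).toArr := by
  rw [toArr_htri]; rfl

end Lists

namespace DirMon

variable {C : Type u} [Category.{v} C] (S : DirMon C)

/-! ### Iterated products and associators on lists -/

/-- The right-normed product `x₁ □ (x₂ □ (⋯ □ (xₖ □ 0)))`. -/
def prod : List C → C
  | [] => S.zero
  | x :: l => S.box x (prod l)

/-- The right-normed product on morphisms. -/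
def prodMap : {l m : List C} → LHom l m → (S.prod l ⟶ S.prod m)
  | _, _, .nil => 𝟙 S.zero
  | _, _, .cons f t => S.boxMap f (prodMap t)

/-- The comparison `∏ B □ ∏ D ⟶ ∏ (B ++ D)`, moving the parentheses to the right with `η`. -/
def phi : (B D : List C) → (S.box (S.prod B) (S.prod D) ⟶ S.prod (B ++ D))
  | [], D => eqToHom (S.zero_left_obj (S.prod D))
  | x :: B, D => S.η x (S.prod B) (S.prod D) ≫ S.boxMap (𝟙 x) (phi B D)

/-- The associator on lists: `phi` whiskered on the left by the entries of `A`. -/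
def al : (A B D : List C) → (S.prod (A ++ S.prod B :: D) ⟶ S.prod (A ++ (B ++ D)))
  | [], B, D => S.phi B D
  | x :: A, B, D => S.boxMap (𝟙 x) (al A B D)

/-- The product of `g` with identities on the entries of `A` and `E`. -/
def whisk : (A : List C) → {X Y : C} → (X ⟶ Y) → (E : List C) →
    (S.prod (A ++ X :: E) ⟶ S.prod (A ++ Y :: E))
  | [], _, _, g, E => S.boxMap g (𝟙 (S.prod E))
  | x :: A, _, _, g, E => S.boxMap (𝟙 x) (whisk A g E)

/-! ### Calculus of `□` and transport -/

theorem boxMap_id_comp {X Y Y' Y'' : C} (g : Y ⟶ Y') (g' : Y' ⟶ Y'') :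
    S.boxMap (𝟙 X) (g ≫ g') = S.boxMap (𝟙 X) g ≫ S.boxMap (𝟙 X) g' := by
  rw [← S.boxMap_comp, Category.id_comp]

theorem boxMap_comp_id {X X' X'' Y : C} (f : X ⟶ X') (f' : X' ⟶ X'') :
    S.boxMap (f ≫ f') (𝟙 Y) = S.boxMap f (𝟙 Y) ≫ S.boxMap f' (𝟙 Y) := by
  rw [← S.boxMap_comp, Category.id_comp]

theorem boxMap_eq_right {X Y Y' : C} (e : Y = Y') :
    S.boxMap (𝟙 X) (eqToHom e) = eqToHom (by rw [e]) := by
  subst e; simp [S.boxMap_id]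

theorem boxMap_eq_left {X X' Y : C} (e : X = X') :
    S.boxMap (eqToHom e) (𝟙 Y) = eqToHom (by rw [e]) := by
  subst e; simp [S.boxMap_id]

theorem η_congr {X Y Y' Z Z' : C} (eY : Y = Y') (eZ : Z = Z') :
    S.η X Y Z = eqToHom (by rw [eY, eZ]) ≫ S.η X Y' Z' ≫ eqToHom (by rw [eY, eZ]) := by
  subst eY eZ; simp

/-- Left whiskering preserves squares whose two remaining sides are transports. -/
theorem boxMap_square {X P Q P' Q' : C} {f : P ⟶ Q} {f' : P' ⟶ Q'} (e₁ : P = P') (e₂ : Q = Q')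
    (h : f ≫ eqToHom e₂ = eqToHom e₁ ≫ f')
    (d₁ : S.box X P = S.box X P') (d₂ : S.box X Q = S.box X Q') :
    S.boxMap (𝟙 X) f ≫ eqToHom d₂ = eqToHom d₁ ≫ S.boxMap (𝟙 X) f' := by
  subst e₁ e₂
  simp at h
  simp [h]

/-- Whiskering by the unit does nothing, up to transport. -/
theorem boxMap_zero_square {P Q : C} (f : P ⟶ Q)
    (d₁ : S.box S.zero P = P) (d₂ : S.box S.zero Q = Q) :
    S.boxMap (𝟙 S.zero) f ≫ eqToHom d₂ = eqToHom d₁ ≫ f := by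
  simp [S.zero_left_map]

theorem prodMap_idl (l : List C) : S.prodMap (LHom.idl l) = 𝟙 _ := by
  induction l with
  | nil => rfl
  | cons x l ih => simp only [LHom.idl, prodMap, ih, S.boxMap_id]; rfl

/-- `prodMap` depends only on the underlying list of arrows, up to transport. -/
theorem prodMap_conj {l m l' m' : List C} (f : LHom l m) (g : LHom l' m')
    (h : f.toArr = g.toArr) (e : S.prod l = S.prod l') (e' : S.prod m' = S.prod m) :
    S.prodMap f = eqToHom e ≫ S.prodMap g ≫ eqToHom e' := by
  apply eq_conj_of_arrow
  let F : List (Arrow C) → Arrow C :=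
    List.foldr (fun f g => Arrow.mk (S.boxMap f.hom g.hom)) (Arrow.mk (𝟙 S.zero))
  have key : ∀ {l m : List C} (f : LHom l m), Arrow.mk (S.prodMap f) = F f.toArr := by
    intro l m f
    induction f with
    | nil => rfl
    | cons f t ih =>
      simp only [prodMap, LHom.toArr, F, List.foldr_cons]
      change _ = Arrow.mk (S.boxMap (Arrow.mk f).hom (F t.toArr).hom)
      rw [← ih]; rfl
  rw [key, key, h]

theorem prodMap_ofFam_comp (k : ℕ) {A B D : Fin k → C}
    (f : ∀ i, A i ⟶ B i) (g : ∀ i, B i ⟶ D i) :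
    S.prodMap (LHom.ofFam k (fun i => f i ≫ g i)) =
      S.prodMap (LHom.ofFam k f) ≫ S.prodMap (LHom.ofFam k g) := by
  induction k with
  | zero => exact (Category.id_comp _).symm
  | succ k ih =>
    simp only [LHom.ofFam, prodMap]
    rw [ih (fun i => f i.succ) (fun i => g i.succ), S.boxMap_comp]
    rfl

theorem prodMap_whisk (A : List C) {X Y : C} (g : X ⟶ Y) (E : List C) :
    S.prodMap ((LHom.idl A).append (.cons g (LHom.idl E))) = S.whisk A g E := by
  induction A with
  | nil => simp only [LHom.idl, LHom.append, prodMap, prodMap_idl, whisk]; rfl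
  | cons x A ih => simp only [LHom.idl, LHom.append, prodMap, ih, whisk]; rfl

theorem whisk_comp (A : List C) {X Y Z : C} (f : X ⟶ Y) (g : Y ⟶ Z) (E : List C) :
    S.whisk A (f ≫ g) E = S.whisk A f E ≫ S.whisk A g E := by
  induction A with
  | nil => exact S.boxMap_comp_id _ _
  | cons x A ih => simp only [whisk, ih]; exact S.boxMap_id_comp _ _

theorem whisk_eqToHom (A : List C) {X Y : C} (e : X = Y) (E : List C) :
    S.whisk A (eqToHom e) E = eqToHom (by rw [e]) := by
  subst e
  induction A with
  | nil => simp only [whisk, eqToHom_refl, S.boxMap_id]; rfl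
  | cons x A ih => simp only [whisk, ih]; exact S.boxMap_eq_right _

/-! ### Naturality -/

/-- The inductive step for naturality of `phi`: a naturality square for `p` gives one for
`η X Y Z ≫ (X □ p)`. -/
theorem η_natural_step {X X' Y Y' Z Z' Q Q' : C} (f : X ⟶ X') (g : Y ⟶ Y') (k : Z ⟶ Z')
    {p : S.box Y Z ⟶ Q} {p' : S.box Y' Z' ⟶ Q'} {q : Q ⟶ Q'}
    (h : S.boxMap g k ≫ p' = p ≫ q) :
    S.boxMap (S.boxMap f g) k ≫ (S.η X' Y' Z' ≫ S.boxMap (𝟙 X') p') =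
      (S.η X Y Z ≫ S.boxMap (𝟙 X) p) ≫ S.boxMap f q := by
  rw [← Category.assoc, S.η_natural, Category.assoc, Category.assoc, ← S.boxMap_comp,
    ← S.boxMap_comp, h, Category.comp_id, Category.id_comp]

theorem phi_natural {B B' D D' : List C} (g : LHom B B') (k : LHom D D') :
    S.boxMap (S.prodMap g) (S.prodMap k) ≫ S.phi B' D' =
      S.phi B D ≫ S.prodMap (g.append k) := by
  induction g with
  | nil => exact S.boxMap_zero_square _ _ _
  | cons f t ih => exact S.η_natural_step _ _ _ ih

theorem al_natural {A A' B B' D D' : List C} (f : LHom A A') (g : LHom B B') (k : LHom D D') :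
    S.prodMap (f.append (.cons (S.prodMap g) k)) ≫ S.al A' B' D' =
      S.al A B D ≫ S.prodMap (f.append (g.append k)) := by
  induction f with
  | nil => exact S.phi_natural g k
  | cons f t ih =>
    simp only [al, prodMap, LHom.append]
    erw [← S.boxMap_comp, ← S.boxMap_comp]
    rw [ih, Category.comp_id, Category.id_comp]

/-! ### Unit conditions -/

theorem prod_unit (A B : List C) : S.prod (A ++ S.zero :: B) = S.prod (A ++ B) := by
  induction A with
  | nil => exact S.zero_left_obj _
  | cons x A ih => exact congrArg (S.box x) ih

theorem prodMap_unit {A A' B B' : List C} (f : LHom A A') (g : LHom B B') :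
    S.prodMap (f.append (.cons (𝟙 S.zero) g)) =
      eqToHom (S.prod_unit A B) ≫ S.prodMap (f.append g) ≫
        eqToHom (S.prod_unit A' B').symm := by
  induction f with
  | nil => exact S.zero_left_map _
  | cons f t ih =>
    simp only [LHom.append, prodMap]
    rw [ih]
    have h : ∀ {X X' P P' Q Q' : C} (f : X ⟶ X') (g : P ⟶ Q) (e : P' = P) (e' : Q = Q'),
        S.boxMap f (eqToHom e ≫ g ≫ eqToHom e') =
          eqToHom (by rw [e]) ≫ S.boxMap f g ≫ eqToHom (by rw [e']) := by
      intro X X' P P' Q Q' f g e e'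
      subst e e'; simp
    exact h _ _ _ _

theorem al_nil (A D : List C) (e : S.prod (A ++ S.prod [] :: D) = S.prod (A ++ ([] ++ D))) :
    S.al A [] D = eqToHom e := by
  induction A with
  | nil => rfl
  | cons x A ih => simp only [al]; rw [ih (S.prod_unit A D)]; exact S.boxMap_eq_right _

theorem prod_single (x : C) : S.prod [x] = x := S.zero_right_obj x

theorem al_single (A : List C) (x : C) (D : List C)
    (e : S.prod (A ++ S.prod [x] :: D) = S.prod (A ++ ([x] ++ D))) :
    S.al A [x] D = eqToHom e := by
  induction A with
  | nil =>
    simp only [al, phi]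
    erw [S.η_zero_mid x (S.prod D) (by rw [S.zero_right_obj, S.zero_left_obj]),
      S.boxMap_eq_right]
    exact eqToHom_trans _ _
  | cons x A ih =>
    simp only [al]; rw [ih (by rw [S.prod_single]; rfl)]; exact S.boxMap_eq_right _

theorem phi_nil (B : List C) (e : S.box (S.prod B) (S.prod []) = S.prod (B ++ [])) :
    S.phi B [] = eqToHom e := by
  induction B with
  | nil => rfl
  | cons x B ih =>
    simp only [phi]
    rw [ih (by rw [List.append_nil]; exact S.zero_right_obj _)]
    erw [S.η_zero_right x (S.prod B) (by rw [S.zero_right_obj, S.zero_right_obj]),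
      S.boxMap_eq_right]
    exact eqToHom_trans _ _

theorem prod_append_congr (B : List C) {D D' : List C} (h : S.prod D = S.prod D') :
    S.prod (B ++ D) = S.prod (B ++ D') := by
  induction B with
  | nil => exact h
  | cons x B ih => exact congrArg (S.box x) ih

/-- One inductive step for `phi`: a square of transports for `p` gives one for
`η x Y Z ≫ (x □ p)`. -/
theorem η_step {x Y Z Y' Z' Q Q' : C} {p : S.box Y Z ⟶ Q} {p' : S.box Y' Z' ⟶ Q'}
    (eY : Y = Y') (eZ : Z = Z') (eQ : Q = Q')
    (h : p ≫ eqToHom eQ = eqToHom (by rw [eY, eZ]) ≫ p')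
    (d₁ : S.box (S.box x Y) Z = S.box (S.box x Y') Z') (d₂ : S.box x Q = S.box x Q') :
    (S.η x Y Z ≫ S.boxMap (𝟙 x) p) ≫ eqToHom d₂ =
      eqToHom d₁ ≫ (S.η x Y' Z' ≫ S.boxMap (𝟙 x) p') := by
  subst eY eZ eQ
  simp at h
  simp [h]

/-- `phi B D` depends on `D` only through its product, up to transport. -/
theorem phi_congr_right (B : List C) {D D' : List C} (h : S.prod D = S.prod D')
    (e₁ : S.box (S.prod B) (S.prod D) = S.box (S.prod B) (S.prod D'))
    (e₂ : S.prod (B ++ D) = S.prod (B ++ D')) :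
    S.phi B D ≫ eqToHom e₂ = eqToHom e₁ ≫ S.phi B D' := by
  induction B with
  | nil => exact (eqToHom_trans _ _).trans (eqToHom_trans _ _).symm
  | cons x B ih =>
    exact S.η_step rfl h (S.prod_append_congr B h) (ih _ _) _ _

theorem al_congr_right (A B : List C) {D D' : List C} (h : S.prod D = S.prod D')
    (e₁ : S.prod (A ++ S.prod B :: D) = S.prod (A ++ S.prod B :: D'))
    (e₂ : S.prod (A ++ (B ++ D)) = S.prod (A ++ (B ++ D'))) :
    S.al A B D ≫ eqToHom e₂ = eqToHom e₁ ≫ S.al A B D' := by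
  induction A with
  | nil => exact S.phi_congr_right B h _ _
  | cons x A ih =>
    exact S.boxMap_square
      (S.prod_append_congr A (D := S.prod B :: D) (D' := S.prod B :: D')
        (congrArg (S.box (S.prod B)) h))
      (S.prod_append_congr A (S.prod_append_congr B h)) (ih _ _) _ _

theorem al_unit_left (A B D E : List C)
    (e₁ : S.prod ((A ++ S.zero :: B) ++ S.prod D :: E) = S.prod ((A ++ B) ++ S.prod D :: E))
    (e₂ : S.prod ((A ++ S.zero :: B) ++ (D ++ E)) = S.prod ((A ++ B) ++ (D ++ E))) :
    S.al (A ++ S.zero :: B) D E ≫ eqToHom e₂ = eqToHom e₁ ≫ S.al (A ++ B) D E := by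
  induction A with
  | nil => exact S.boxMap_zero_square _ _ _
  | cons x A ih =>
    have h : ∀ F : List C, S.prod ((A ++ S.zero :: B) ++ F) = S.prod ((A ++ B) ++ F) := by
      intro F
      simpa using S.prod_unit A (B ++ F)
    exact S.boxMap_square (h _) (h _) (ih _ _) _ _

theorem phi_unit (B D E : List C)
    (e₁ : S.box (S.prod (B ++ S.zero :: D)) (S.prod E) = S.box (S.prod (B ++ D)) (S.prod E))
    (e₂ : S.prod ((B ++ S.zero :: D) ++ E) = S.prod ((B ++ D) ++ E)) :
    S.phi (B ++ S.zero :: D) E ≫ eqToHom e₂ = eqToHom e₁ ≫ S.phi (B ++ D) E := by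
  induction B with
  | nil =>
    change (S.η S.zero _ _ ≫ S.boxMap (𝟙 S.zero) (S.phi D E)) ≫ eqToHom e₂ = _ ≫ S.phi D E
    rw [S.η_zero_left _ _ (by rw [S.zero_left_obj, S.zero_left_obj]), Category.assoc]
    erw [S.boxMap_zero_square _ (S.zero_left_obj _) e₂]
    rw [eqToHom_trans_assoc]
    rfl
  | cons x B ih =>
    have h : S.prod ((B ++ S.zero :: D) ++ E) = S.prod ((B ++ D) ++ E) := by
      simpa using S.prod_unit B (D ++ E)
    exact S.η_step (S.prod_unit B D) rfl h (ih _ _) _ _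

theorem al_unit_mid (A B D E : List C)
    (e₁ : S.prod (A ++ S.prod (B ++ S.zero :: D) :: E) = S.prod (A ++ S.prod (B ++ D) :: E))
    (e₂ : S.prod (A ++ ((B ++ S.zero :: D) ++ E)) = S.prod (A ++ ((B ++ D) ++ E))) :
    S.al A (B ++ S.zero :: D) E ≫ eqToHom e₂ = eqToHom e₁ ≫ S.al A (B ++ D) E := by
  induction A with
  | nil => exact S.phi_unit B D E _ _
  | cons x A ih =>
    have h : S.prod (A ++ ((B ++ S.zero :: D) ++ E)) = S.prod (A ++ ((B ++ D) ++ E)) := by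
      simpa using S.prod_unit (A ++ B) (D ++ E)
    exact S.boxMap_square (by rw [S.prod_unit B D]) h (ih _ _) _ _

/-! ### Disjoint and nested multiplications -/

/-- Naturality of `phi` in its second factor with respect to an associator. -/
theorem phi_al (B D E F : List C)
    (e₁ : S.prod (B ++ (D ++ S.prod E :: F)) = S.prod ((B ++ D) ++ S.prod E :: F))
    (e₃ : S.prod ((B ++ D) ++ (E ++ F)) = S.prod (B ++ (D ++ (E ++ F)))) :
    S.phi B (D ++ S.prod E :: F) ≫ eqToHom e₁ ≫ S.al (B ++ D) E F ≫ eqToHom e₃ =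
      S.boxMap (𝟙 (S.prod B)) (S.al D E F) ≫ S.phi B (D ++ (E ++ F)) := by
  induction B with
  | nil =>
    change eqToHom _ ≫ 𝟙 _ ≫ S.al D E F ≫ 𝟙 _ =
      S.boxMap (𝟙 S.zero) (S.al D E F) ≫ eqToHom _
    rw [S.boxMap_zero_square, Category.id_comp, Category.comp_id]
  | cons x B ih =>
    have h₁ : S.prod (B ++ (D ++ S.prod E :: F)) = S.prod ((B ++ D) ++ S.prod E :: F) := by simp
    have h₃ : S.prod ((B ++ D) ++ (E ++ F)) = S.prod (B ++ (D ++ (E ++ F))) := by simp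
    have := ih h₁ h₃
    have h2 := congrArg (S.boxMap (𝟙 x)) this
    simp only [S.boxMap_id_comp, S.boxMap_eq_right] at h2
    have h3 := S.η_natural (𝟙 x) (𝟙 (S.prod B)) (S.al D E F)
    rw [S.boxMap_id] at h3
    change (S.η x _ _ ≫ S.boxMap (𝟙 x) (S.phi B _)) ≫ eqToHom e₁ ≫
      S.boxMap (𝟙 x) (S.al (B ++ D) E F) ≫ eqToHom e₃ =
      S.boxMap (𝟙 (S.box x (S.prod B))) (S.al D E F) ≫ (S.η x _ _ ≫ S.boxMap (𝟙 x) (S.phi B _))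
    rw [Category.assoc, reassoc_of% h3, ← h2]
    rfl

/-- The square for two disjoint multiplications; entries of `A` are whiskered off, which
leaves `phi_al`. -/
theorem al_disjoint (A B D E F : List C)
    (e₀ : S.prod (A ++ S.prod B :: (D ++ S.prod E :: F)) =
      S.prod ((A ++ S.prod B :: D) ++ S.prod E :: F))
    (e₁ : S.prod (A ++ (B ++ (D ++ S.prod E :: F))) =
      S.prod ((A ++ (B ++ D)) ++ S.prod E :: F))
    (e₂ : S.prod ((A ++ S.prod B :: D) ++ (E ++ F)) = S.prod (A ++ S.prod B :: (D ++ (E ++ F))))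
    (e₃ : S.prod ((A ++ (B ++ D)) ++ (E ++ F)) = S.prod (A ++ (B ++ (D ++ (E ++ F))))) :
    S.al A B (D ++ S.prod E :: F) ≫ eqToHom e₁ ≫ S.al (A ++ (B ++ D)) E F ≫ eqToHom e₃ =
      eqToHom e₀ ≫ S.al (A ++ S.prod B :: D) E F ≫ eqToHom e₂ ≫ S.al A B (D ++ (E ++ F)) := by
  induction A with
  | nil =>
    refine (S.phi_al B D E F e₁ e₃).trans ?_
    change _ = 𝟙 _ ≫ _ ≫ 𝟙 _ ≫ _
    rw [Category.id_comp, Category.id_comp]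
    rfl
  | cons x A ih =>
    have := congrArg (S.boxMap (𝟙 x)) (ih (by simp) (by simp) (by simp) (by simp))
    simp only [S.boxMap_id_comp, S.boxMap_eq_right] at this
    exact this

/-- The pentagon for `phi`: both ways of comparing `(∏ B □ ∏ D) □ ∏ E` with `∏ (B ++ D ++ E)`
agree. Each entry of `B` uses the pentagon for `η` once. -/
theorem phi_phi (B D E : List C)
    (e : S.prod (B ++ (D ++ E)) = S.prod ((B ++ D) ++ E)) :
    S.boxMap (S.phi B D) (𝟙 (S.prod E)) ≫ S.phi (B ++ D) E =
      S.η (S.prod B) (S.prod D) (S.prod E) ≫ S.boxMap (𝟙 _) (S.phi D E) ≫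
        S.phi B (D ++ E) ≫ eqToHom e := by
  induction B with
  | nil =>
    change S.boxMap (eqToHom _) (𝟙 _) ≫ S.phi D E =
      S.η S.zero _ _ ≫ S.boxMap (𝟙 S.zero) (S.phi D E) ≫ eqToHom _ ≫ 𝟙 _
    rw [S.η_zero_left _ _ (by rw [S.zero_left_obj, S.zero_left_obj]), S.zero_left_map,
      S.boxMap_eq_left]
    simp
  | cons x B ih =>
    have h2 := congrArg (S.boxMap (𝟙 x)) (ih (by simp))
    simp only [S.boxMap_id_comp, S.boxMap_eq_right] at h2
    change S.boxMap (S.η x _ _ ≫ S.boxMap (𝟙 x) (S.phi B D)) (𝟙 _) ≫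
        (S.η x _ _ ≫ S.boxMap (𝟙 x) (S.phi (B ++ D) E)) =
      S.η (S.box x (S.prod B)) _ _ ≫ S.boxMap (𝟙 (S.box x (S.prod B))) (S.phi D E) ≫
        (S.η x _ _ ≫ S.boxMap (𝟙 x) (S.phi B (D ++ E))) ≫ eqToHom e
    have h3 := S.η_natural (𝟙 x) (𝟙 (S.prod B)) (S.phi D E)
    rw [S.boxMap_id] at h3
    have h4 := S.η_natural (𝟙 x) (S.phi B D) (𝟙 (S.prod E))
    have h5 := S.pentagon x (S.prod B) (S.prod D) (S.prod E)
    rw [S.boxMap_comp_id]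
    simp only [Category.assoc]
    rw [reassoc_of% h4, h2, reassoc_of% h3, reassoc_of% h5]
    rfl

/-- The nested square with no outer entries on the left: naturality of `η` strips the entries
of `B`, and `phi_phi` is the remaining case. -/
theorem al_phi (B D E F : List C)
    (e₁ : S.prod ((B ++ S.prod D :: E) ++ F) = S.prod (B ++ S.prod D :: (E ++ F)))
    (e₂ : S.prod (B ++ (D ++ (E ++ F))) = S.prod ((B ++ (D ++ E)) ++ F)) :
    S.boxMap (S.al B D E) (𝟙 (S.prod F)) ≫ S.phi (B ++ (D ++ E)) F =
      S.phi (B ++ S.prod D :: E) F ≫ eqToHom e₁ ≫ S.al B D (E ++ F) ≫ eqToHom e₂ := by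
  induction B with
  | nil =>
    refine (S.phi_phi D E F e₂).trans ?_
    change _ = (S.η _ _ _ ≫ S.boxMap (𝟙 _) (S.phi E F)) ≫ 𝟙 _ ≫ S.phi D (E ++ F) ≫ _
    rw [Category.id_comp, Category.assoc]
  | cons x B ih =>
    have h2 := congrArg (S.boxMap (𝟙 x)) (ih (by simp) (by simp))
    simp only [S.boxMap_id_comp, S.boxMap_eq_right] at h2
    have h4 := S.η_natural (𝟙 x) (S.al B D E) (𝟙 (S.prod F))
    change S.boxMap (S.boxMap (𝟙 x) (S.al B D E)) (𝟙 _) ≫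
        (S.η x _ _ ≫ S.boxMap (𝟙 x) (S.phi (B ++ (D ++ E)) F)) =
      (S.η x _ _ ≫ S.boxMap (𝟙 x) (S.phi (B ++ S.prod D :: E) F)) ≫ eqToHom e₁ ≫
        S.boxMap (𝟙 x) (S.al B D (E ++ F)) ≫ eqToHom e₂
    rw [reassoc_of% h4, h2, Category.assoc]
    rfl

/-- The square for nested multiplications; entries of `A` are whiskered off, which leaves
`al_phi`. -/
theorem al_nested (A B D E F : List C)
    (e₁ : S.prod (A ++ ((B ++ S.prod D :: E) ++ F)) = S.prod ((A ++ B) ++ S.prod D :: (E ++ F)))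
    (e₂ : S.prod ((A ++ B) ++ (D ++ (E ++ F))) = S.prod (A ++ ((B ++ (D ++ E)) ++ F))) :
    S.whisk A (S.al B D E) F ≫ S.al A (B ++ (D ++ E)) F =
      S.al A (B ++ S.prod D :: E) F ≫ eqToHom e₁ ≫ S.al (A ++ B) D (E ++ F) ≫ eqToHom e₂ := by
  induction A with
  | nil => exact S.al_phi B D E F e₁ e₂
  | cons x A ih =>
    have := congrArg (S.boxMap (𝟙 x)) (ih (by simp) (by simp))
    simp only [S.boxMap_id_comp, S.boxMap_eq_right] at this
    exact this

/-! ### Transport to tuples -/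

/-- The associator `al`, transported along equalities of lists. -/
def alT {A B D P Q : List C} (hP : P = A ++ S.prod B :: D) (hQ : Q = A ++ (B ++ D)) :
    S.prod P ⟶ S.prod Q :=
  eqToHom (by rw [hP]) ≫ S.al A B D ≫ eqToHom (by rw [hQ])

theorem alT_unit_left {A B D E AZB AB P Q P' Q' : List C}
    (hZ : AZB = A ++ S.zero :: B) (hAB : AB = A ++ B)
    (hP : P = AZB ++ S.prod D :: E) (hQ : Q = AZB ++ (D ++ E))
    (hP' : P' = AB ++ S.prod D :: E) (hQ' : Q' = AB ++ (D ++ E))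
    (e₁ : S.prod P = S.prod P') (e₂ : S.prod Q = S.prod Q') :
    S.alT hP hQ ≫ eqToHom e₂ = eqToHom e₁ ≫ S.alT hP' hQ' := by
  subst hZ hAB hP hQ hP' hQ'
  simpa [alT] using S.al_unit_left A B D E e₁ e₂

theorem alT_unit_right {A B D E DZE DE P Q P' Q' : List C}
    (hZ : DZE = D ++ S.zero :: E) (hDE : DE = D ++ E)
    (hP : P = A ++ S.prod B :: DZE) (hQ : Q = A ++ (B ++ DZE))
    (hP' : P' = A ++ S.prod B :: DE) (hQ' : Q' = A ++ (B ++ DE))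
    (e₁ : S.prod P = S.prod P') (e₂ : S.prod Q = S.prod Q') :
    S.alT hP hQ ≫ eqToHom e₂ = eqToHom e₁ ≫ S.alT hP' hQ' := by
  subst hZ hDE hP hQ hP' hQ'
  simpa [alT] using S.al_congr_right A B (S.prod_unit D E) e₁ e₂

theorem alT_unit_mid {A B D E BZD BD P Q P' Q' : List C}
    (hZ : BZD = B ++ S.zero :: D) (hBD : BD = B ++ D)
    (hP : P = A ++ S.prod BZD :: E) (hQ : Q = A ++ (BZD ++ E))
    (hP' : P' = A ++ S.prod BD :: E) (hQ' : Q' = A ++ (BD ++ E))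
    (e₁ : S.prod P = S.prod P') (e₂ : S.prod Q = S.prod Q') :
    S.alT hP hQ ≫ eqToHom e₂ = eqToHom e₁ ≫ S.alT hP' hQ' := by
  subst hZ hBD hP hQ hP' hQ'
  simpa [alT] using S.al_unit_mid A B D E e₁ e₂

theorem alT_disjoint {A B D E F DmF ABD AmD DEF P₁ Q₁ P₂ Q₂ P₃ Q₃ P₄ Q₄ : List C}
    (hDmF : DmF = D ++ S.prod E :: F) (hABD : ABD = A ++ (B ++ D))
    (hAmD : AmD = A ++ S.prod B :: D) (hDEF : DEF = D ++ (E ++ F))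
    (hP₁ : P₁ = A ++ S.prod B :: DmF) (hQ₁ : Q₁ = A ++ (B ++ DmF))
    (hP₂ : P₂ = ABD ++ S.prod E :: F) (hQ₂ : Q₂ = ABD ++ (E ++ F))
    (hP₃ : P₃ = AmD ++ S.prod E :: F) (hQ₃ : Q₃ = AmD ++ (E ++ F))
    (hP₄ : P₄ = A ++ S.prod B :: DEF) (hQ₄ : Q₄ = A ++ (B ++ DEF))
    (e₀ : S.prod P₁ = S.prod P₃) (e₁ : S.prod Q₁ = S.prod P₂)
    (e₂ : S.prod Q₃ = S.prod P₄) (e₃ : S.prod Q₂ = S.prod Q₄) :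
    S.alT hP₁ hQ₁ ≫ eqToHom e₁ ≫ S.alT hP₂ hQ₂ ≫ eqToHom e₃ =
      eqToHom e₀ ≫ S.alT hP₃ hQ₃ ≫ eqToHom e₂ ≫ S.alT hP₄ hQ₄ := by
  subst hDmF hABD hAmD hDEF hP₁ hQ₁ hP₂ hQ₂ hP₃ hQ₃ hP₄ hQ₄
  simpa [alT] using S.al_disjoint A B D E F e₀ e₁ e₂ e₃

/-- The square for nested multiplications. The first factor is `μ (id, α, id)`, written as a
whiskering between transports. -/
theorem alT_nested {A B D E F BmE BDE AB EF P₀ P₁ Q₁ P₂ Q₂ P₃ Q₃ : List C}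
    (hBmE : BmE = B ++ S.prod D :: E) (hBDE : BDE = B ++ (D ++ E))
    (hAB : AB = A ++ B) (hEF : EF = E ++ F)
    (hP₀ : P₀ = A ++ S.prod BmE :: F)
    (hP₁ : P₁ = A ++ S.prod BDE :: F) (hQ₁ : Q₁ = A ++ (BDE ++ F))
    (hP₂ : P₂ = A ++ S.prod BmE :: F) (hQ₂ : Q₂ = A ++ (BmE ++ F))
    (hP₃ : P₃ = AB ++ S.prod D :: EF) (hQ₃ : Q₃ = AB ++ (D ++ EF))
    (e₀ : S.prod P₀ = S.prod (A ++ S.prod BmE :: F))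
    (e₀' : S.prod (A ++ S.prod BDE :: F) = S.prod P₁)
    (e₃ : S.prod P₀ = S.prod P₂)
    (e₁ : S.prod Q₂ = S.prod P₃) (e₂ : S.prod Q₃ = S.prod Q₁) :
    (eqToHom e₀ ≫ S.whisk A (S.alT hBmE hBDE) F ≫ eqToHom e₀') ≫ S.alT hP₁ hQ₁ =
      eqToHom e₃ ≫ S.alT hP₂ hQ₂ ≫ eqToHom e₁ ≫ S.alT hP₃ hQ₃ ≫ eqToHom e₂ := by
  subst hBmE hBDE hAB hEF hP₀ hP₁ hQ₁ hP₂ hQ₂ hP₃ hQ₃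
  simpa [alT] using S.al_nested A B D E F e₁ e₂

theorem prodMap_tri {a b c : ℕ} {A A' : Fin a → C} {B B' : Fin b → C} {D D' : Fin c → C}
    (f : ∀ i, A i ⟶ A' i) (g : ∀ j, B j ⟶ B' j) (h : ∀ j, D j ⟶ D' j) :
    S.prodMap (LHom.ofFam _ (htri f g h)) =
      eqToHom (by rw [lst_tri]) ≫
        S.prodMap ((LHom.ofFam _ f).append ((LHom.ofFam _ g).append (LHom.ofFam _ h))) ≫
        eqToHom (by rw [lst_tri]) :=
  S.prodMap_conj _ _ (toArr_htri f g h) _ _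

theorem prodMap_tri_sgl {a c : ℕ} {A A' : Fin a → C} {X Y : C} {D D' : Fin c → C}
    (f : ∀ i, A i ⟶ A' i) (g : X ⟶ Y) (h : ∀ j, D j ⟶ D' j) :
    S.prodMap (LHom.ofFam _ (htri f (hsgl g) h)) =
      eqToHom (by rw [lst_tri_sgl]) ≫
        S.prodMap ((LHom.ofFam _ f).append (.cons g (LHom.ofFam _ h))) ≫
        eqToHom (by rw [lst_tri_sgl]) :=
  S.prodMap_conj _ _ (toArr_htri_sgl f g h) _ _

/-- The `A_∞`-monoidal structure of right-normed products. -/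
def toAMonCat : AMonCat C ⊤ where
  μObj k _ A := S.prod (lst k A)
  μMap k _ _ _ f := S.prodMap (LHom.ofFam k f)
  μMap_id k _ A := by rw [LHom.ofFam_hid, prodMap_idl]
  μMap_comp k _ _ _ _ f g := S.prodMap_ofFam_comp k f g
  one_obj _ A := S.zero_right_obj (A 0)
  one_map _ _ _ f := S.zero_right_map (f 0)
  unit_obj i j _ _ _ A B := by
    rw [lst_tri_sgl, lst_app]; exact S.prod_unit _ _
  unit_map i j _ _ _ A A' B B' f g := by
    rw [S.prodMap_tri_sgl]
    rw [S.prodMap_conj _ _ ((toArr_happ f g).trans (LHom.toArr_append _ _).symm)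
      (by rw [lst_app]) (by rw [lst_app])]
    exact conj_conj (S.prodMap_unit (LHom.ofFam i f) (LHom.ofFam j g)) _ _ _ _ _ _
  assoc a b c _ _ _ A B D := S.alT (lst_tri_sgl A (S.prod (lst b B)) D) (lst_tri A B D)
  assoc_natural a b c _ _ _ A A' B B' D D' f g k := by
    rw [S.prodMap_tri_sgl, S.prodMap_tri]
    simp [alT, reassoc_of% (S.al_natural (LHom.ofFam a f) (LHom.ofFam b g) (LHom.ofFam c k))]
  assoc_zero a c _ _ _ A D e := by
    exact conj_eqToHom (S.al_nil (lst a A) (lst c D) (S.prod_unit _ _)) _ _ _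
  assoc_one a c _ _ _ A B D e := by
    exact conj_eqToHom
      (S.al_single (lst a A) (B 0) (lst c D) (by rw [S.prod_single]; rfl)) _ _ _
  assoc_mid b _ _ _ B e := by
    exact conj_eqToHom
      (S.phi_nil (lst b B) (by rw [List.append_nil]; exact S.zero_right_obj _)) _ _ _
  cond_ii a b c d _ _ _ _ _ _ A B Cc D e₁ e₂ :=
    S.alT_unit_left (lst_tri_sgl A S.zero B) (lst_app A B) _ _ _ _ e₁ e₂
  cond_iii a b c d _ _ _ _ _ _ A B Cc D e₁ e₂ :=
    S.alT_unit_right (lst_tri_sgl Cc S.zero D) (lst_app Cc D) _ _ _ _ e₁ e₂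
  cond_iv a b c d _ _ _ _ _ _ A B Cc D e₁ e₂ :=
    S.alT_unit_mid (lst_tri_sgl B S.zero Cc) (lst_app B Cc) _ _ _ _ e₁ e₂
  cond_v a b c d e _ _ _ _ _ _ _ _ _ _ A B Cc D E e₀ e₁ e₂ e₃ :=
    S.alT_disjoint (lst_tri_sgl Cc _ E) (lst_tri A B Cc) (lst_tri_sgl A _ Cc) (lst_tri Cc D E)
      _ _ _ _ _ _ _ _ e₀ e₁ e₂ e₃
  cond_vi a b c d e _ _ _ _ _ _ _ _ A B Cc D E e₁ e₂ := by
    rw [S.prodMap_tri_sgl, LHom.ofFam_hid, LHom.ofFam_hid, S.prodMap_whisk]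
    refine (S.alT_nested (lst_tri_sgl B _ D) (lst_tri B Cc D) (lst_app A B) (lst_app D E)
      (lst_tri_sgl A _ E) _ _ (lst_tri_sgl A _ E) (lst_tri _ _ _) (lst_tri_sgl _ _ _)
      (lst_tri _ _ _) _ _ rfl e₁ e₂).trans ?_
    exact Category.id_comp _

/-- The ternary associator, once the trailing units are removed, is `η`. -/
theorem phi_pair (X Y Z : C) (e₁ : S.box (S.prod [X, Y]) (S.prod [Z]) = S.box (S.box X Y) Z)
    (e₂ : S.box X (S.box Y Z) = S.prod [X, Y, Z]) :
    S.phi [X, Y] [Z] = eqToHom e₁ ≫ S.η X Y Z ≫ eqToHom e₂ := by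
  have h := S.al_single [] Y [Z] (by rw [S.prod_single]; rfl)
  have hY := S.prod_single Y
  have hZ := S.prod_single Z
  change S.phi [Y] [Z] = _ at h
  change S.η X (S.prod [Y]) (S.prod [Z]) ≫ S.boxMap (𝟙 X) (S.phi [Y] [Z]) = _
  rw [h, S.η_congr hY hZ]
  erw [S.boxMap_eq_right]
  rw [Category.assoc, Category.assoc]
  erw [eqToHom_trans]
  rfl

end DirMon

/-- Theorem 3.4 of the paper.  A directed monoidal category with a
strict unit — a bifunctor `□`, an object `0` which is a strict unit for `□`, and a
natural transformation `η_{A,B,C} : (A □ B) □ C ⟶ A □ (B □ C)` (not necessarily an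
isomorphism) which is the identity whenever one of `A`, `B`, `C` is `0` and satisfies
the pentagon identity — can be endowed with the structure of an `A_∞`-monoidal
category in which `μ₀ = 0`, `μ₂ = □` (on objects and morphisms), and the associator
`α^{0,2,1}_{(A,B),C} : μ₂(μ₂(A,B),C) ⟶ μ₃(A,B,C)` equals `η_{A,B,C}`. -/
theorem directed_monoidal_gives_Ainfty {C : Type u} [Category.{v} C]
    (box : C → C → C)
    (boxMap : ∀ {X X' Y Y' : C}, (X ⟶ X') → (Y ⟶ Y') → (box X Y ⟶ box X' Y'))
    (boxMap_id : ∀ X Y : C, boxMap (𝟙 X) (𝟙 Y) = 𝟙 (box X Y))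
    (boxMap_comp : ∀ {X X' X'' Y Y' Y'' : C}
      (f : X ⟶ X') (f' : X' ⟶ X'') (g : Y ⟶ Y') (g' : Y' ⟶ Y''),
      boxMap (f ≫ f') (g ≫ g') = boxMap f g ≫ boxMap f' g')
    (zero : C)
    (zero_left_obj : ∀ X : C, box zero X = X)
    (zero_right_obj : ∀ X : C, box X zero = X)
    (zero_left_map : ∀ {X Y : C} (f : X ⟶ Y),
      boxMap (𝟙 zero) f = eqToHom (zero_left_obj X) ≫ f ≫ eqToHom (zero_left_obj Y).symm)
    (zero_right_map : ∀ {X Y : C} (f : X ⟶ Y),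
      boxMap f (𝟙 zero) = eqToHom (zero_right_obj X) ≫ f ≫ eqToHom (zero_right_obj Y).symm)
    (η : ∀ X Y Z : C, box (box X Y) Z ⟶ box X (box Y Z))
    (η_natural : ∀ {X X' Y Y' Z Z' : C} (f : X ⟶ X') (g : Y ⟶ Y') (h : Z ⟶ Z'),
      boxMap (boxMap f g) h ≫ η X' Y' Z' = η X Y Z ≫ boxMap f (boxMap g h))
    (η_zero_left : ∀ (Y Z : C) (e : box (box zero Y) Z = box zero (box Y Z)),
      η zero Y Z = eqToHom e)
    (η_zero_mid : ∀ (X Z : C) (e : box (box X zero) Z = box X (box zero Z)),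
      η X zero Z = eqToHom e)
    (η_zero_right : ∀ (X Y : C) (e : box (box X Y) zero = box X (box Y zero)),
      η X Y zero = eqToHom e)
    (pentagon : ∀ W X Y Z : C,
      η (box W X) Y Z ≫ η W X (box Y Z) =
        boxMap (η W X Y) (𝟙 Z) ≫ η W (box X Y) Z ≫ boxMap (𝟙 W) (η X Y Z)) :
    ∃ M : AMonCat C ⊤,
      (∀ h0 : Ok ⊤ 0, M.μObj 0 h0 emp = zero) ∧
      (∀ (h2 : Ok ⊤ 2) (X Y : C), M.μObj 2 h2 (pair X Y) = box X Y) ∧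
      (∀ (h2 : Ok ⊤ 2) (X X' Y Y' : C) (f : X ⟶ X') (g : Y ⟶ Y'),
        ∃ (e₁ : box X Y = M.μObj 2 h2 (pair X Y))
          (e₂ : M.μObj 2 h2 (pair X' Y') = box X' Y'),
          boxMap f g = eqToHom e₁ ≫ M.μMap 2 h2 (pairHom f g) ≫ eqToHom e₂) ∧
      (∀ (h3 : Ok ⊤ (0 + 2 + 1)) (h11 : Ok ⊤ (0 + 1 + 1)) (h2 : Ok ⊤ 2) (X Y Z : C),
        ∃ (e₁ : M.μObj (0 + 1 + 1) h11
              (tri emp (sgl (M.μObj 2 h2 (pair X Y))) (sgl Z)) = box (box X Y) Z)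
          (e₂ : box X (box Y Z) = M.μObj (0 + 2 + 1) h3 (tri emp (pair X Y) (sgl Z))),
          M.assoc 0 2 1 h3 h11 h2 emp (pair X Y) (sgl Z) =
            eqToHom e₁ ≫ η X Y Z ≫ eqToHom e₂) := by
  let S : DirMon C :=
    { box := box, boxMap := boxMap, boxMap_id := boxMap_id, boxMap_comp := boxMap_comp,
      zero := zero, zero_left_obj := zero_left_obj, zero_right_obj := zero_right_obj,
      zero_left_map := zero_left_map, zero_right_map := zero_right_map, η := η,
      η_natural := η_natural, η_zero_left := η_zero_left, η_zero_mid := η_zero_mid,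
      η_zero_right := η_zero_right, pentagon := pentagon }
  have h2 : ∀ X Y : C, S.prod [X, Y] = box X Y := fun X Y =>
    congrArg (box X) (zero_right_obj Y)
  refine ⟨S.toAMonCat, fun _ => rfl, fun _ X Y => h2 X Y, ?_, ?_⟩
  · intro _ X X' Y Y' f g
    refine ⟨(h2 X Y).symm, h2 X' Y', ?_⟩
    change boxMap f g = eqToHom _ ≫ boxMap f (boxMap g (𝟙 zero)) ≫ eqToHom _
    have h : ∀ {P Q P' Q' : C} (g : P ⟶ Q) (g' : P' ⟶ Q') (e : P' = P) (e' : Q = Q')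
        (_ : g' = eqToHom e ≫ g ≫ eqToHom e') (d : box X P = box X P')
        (d' : box X' Q' = box X' Q),
        boxMap f g = eqToHom d ≫ boxMap f g' ≫ eqToHom d' := by
      intro P Q P' Q' g g' e e' hg d d'
      subst e e'
      simp [hg]
    exact h g _ _ _ (zero_right_map g) _ _
  · intro _ _ _ X Y Z
    have e₁ : S.box (S.prod [X, Y]) (S.prod [Z]) = box (box X Y) Z := by
      rw [h2, S.prod_single]
    have e₂ : box X (box Y Z) = S.prod [X, Y, Z] := congrArg (box X) (h2 Y Z).symm
    refine ⟨e₁, e₂, ?_⟩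
    -- the concatenated tuples here compute to concrete lists, so both transports are trivial
    change 𝟙 _ ≫ S.phi [X, Y] [Z] ≫ 𝟙 _ = _
    exact (Category.id_comp _).trans ((Category.comp_id _).trans (S.phi_pair X Y Z e₁ e₂))
end

section
/- For 1 ≤ a < b < c ≤ m, let π_{a,b,c} : 𝔎_m → 𝔎_3 send a parenthesized word P on W_m to the parenthesized word { p ∩ {a,b,c} : p ∈ P and |p ∩ {a,b,c}| = 2 } on the 3-element linear order {a < b < c} (identified with W_3); this is well defined, i.e. the result is a parenthesized word on a 3-element order. The combined map P ↦ (π_{a,b,c}(P))_{1 ≤ a < b < c ≤ m} is a full embedding of posets (an order embedding) of 𝔎_m into the product poset ∏_{1 ≤ a < b < c ≤ m} 𝔎_3: it is injective, and P ≤ Q in 𝔎_m if and only if π_{a,b,c}(P) ≤ π_{a,b,c}(Q) in 𝔎_3 for every triple a < b < c. -/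
/-! For well-definedness, a two-element trace of an interval on `{a < b < c}` is `{a,b}` or `{b,c}`
(never `{a,c}`), and the two cannot both occur, since parentheses `p ⊇ {a,b}` and `q ⊇ {b,c}` with
`c ∉ p`, `a ∉ q` would cross.

For fullness, suppose every projection of `Q` is contained in that of `P`, and let `q ∈ Q` have
endpoints `i < j`. For each `x ∉ q`, the triple formed by `i`, `j`, `x` has trace `{i,j}` on `q`, so
some `p ∈ P` contains `i`, `j` (hence `q`) but not `x`
(`exists_superset_notMem`). The members of `P` containing `q` form a chain by laminarity, and a
minimal one avoids every `x ∉ q`, so it equals `q` (`mem_of_proj_subset`). Injectivity follows from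
fullness by antisymmetry. -/

/-! Parenthesized words on the linear order `W_m = Fin m` (following
Stasheff/Mac Lane as in "A_n monoidal categories"). -/

/-- `p` is a closed interval of `Fin m` (closed under betweenness). -/
def IsInterval {m : ℕ} (p : Finset (Fin m)) : Prop :=
  ∀ ⦃x y z : Fin m⦄, x ∈ p → z ∈ p → x ≤ y → y ≤ z → y ∈ p

/-- Any two members of `P` are nested or disjoint. -/
def Laminar {m : ℕ} (P : Finset (Finset (Fin m))) : Prop :=
  ∀ ⦃p⦄, p ∈ P → ∀ ⦃q⦄, q ∈ P → p ⊆ q ∨ q ⊆ p ∨ Disjoint p q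

/-- A parenthesized word on `W_m`: a finite laminar family of closed intervals,
each of cardinality at least `2` and strictly less than `m`. -/
def IsParenWord (m : ℕ) (P : Finset (Finset (Fin m))) : Prop :=
  (∀ p ∈ P, IsInterval p ∧ 2 ≤ p.card ∧ p.card < m) ∧ Laminar P

/-- The poset `𝔎_m` of parenthesized words on `W_m`, ordered by reverse
inclusion (`P ≤ Q` iff `Q ⊆ P`: more parentheses is smaller). -/
def KWord (m : ℕ) : Type := {P : Finset (Finset (Fin m)) // IsParenWord m P}

instance (m : ℕ) : PartialOrder (KWord m) where
  le P Q := Q.1 ⊆ P.1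
  le_refl P := Finset.Subset.refl _
  le_trans P Q R h h' := Finset.Subset.trans h' h
  le_antisymm P Q h h' := Subtype.ext (Finset.Subset.antisymm h' h)

@[simp] theorem KWord.le_def {m : ℕ} (P Q : KWord m) : P ≤ Q ↔ Q.1 ⊆ P.1 := ⟨fun h => h, fun h => h⟩

/-- The trace of the interval `p` on the three-element suborder `{a < b < c}` of
`W_m`, identified with `W_3 = Fin 3` via `a ↦ 0`, `b ↦ 1`, `c ↦ 2`. -/
def trip {m : ℕ} (a b c : Fin m) (p : Finset (Fin m)) : Finset (Fin 3) :=
  (if a ∈ p then {(0 : Fin 3)} else ∅) ∪ (if b ∈ p then {(1 : Fin 3)} else ∅) ∪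
    (if c ∈ p then {(2 : Fin 3)} else ∅)

open scoped Classical in
/-- The projection `π_{a,b,c} : 𝔎_m → 𝔎_3` of a parenthesized word, keeping those
traces on `{a,b,c}` that have exactly two elements. -/
noncomputable def proj {m : ℕ} (a b c : Fin m) (P : Finset (Finset (Fin m))) :
    Finset (Finset (Fin 3)) :=
  (P.filter fun p => (trip a b c p).card = 2).image (trip a b c)

/-- The two possible two-element traces of an interval on `{a < b < c}`. -/
lemma trip_card_two {m : ℕ} {a b c : Fin m} (hab : a < b) (hbc : b < c) {p : Finset (Fin m)}
    (hp : IsInterval p) (h : (trip a b c p).card = 2) :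
    (a ∈ p ∧ b ∈ p ∧ c ∉ p ∧ trip a b c p = {0, 1}) ∨
      (a ∉ p ∧ b ∈ p ∧ c ∈ p ∧ trip a b c p = {1, 2}) := by
  have hb : a ∈ p → c ∈ p → b ∈ p := fun ha hc => hp ha hc hab.le hbc.le
  by_cases ha : a ∈ p <;> by_cases hb' : b ∈ p <;> by_cases hc : c ∈ p <;>
    simp_all [trip]

lemma mem_proj_left {m : ℕ} {a b c : Fin m} (hab : a < b) (hbc : b < c)
    {P : Finset (Finset (Fin m))} (hP : IsParenWord m P) :
    {0, 1} ∈ proj a b c P ↔ ∃ p ∈ P, a ∈ p ∧ b ∈ p ∧ c ∉ p := by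
  simp only [proj, Finset.mem_image, Finset.mem_filter]
  constructor
  · rintro ⟨p, ⟨hp, h2⟩, he⟩
    rcases trip_card_two hab hbc (hP.1 p hp).1 h2 with h | h
    · exact ⟨p, hp, h.1, h.2.1, h.2.2.1⟩
    · rw [h.2.2.2] at he
      exact absurd he (by decide)
  · rintro ⟨p, hp, ha, hb, hc⟩
    have he : trip a b c p = {0, 1} := by simp [trip, ha, hb, hc]
    exact ⟨p, ⟨hp, by rw [he]; decide⟩, he⟩

lemma mem_proj_right {m : ℕ} {a b c : Fin m} (hab : a < b) (hbc : b < c)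
    {P : Finset (Finset (Fin m))} (hP : IsParenWord m P) :
    {1, 2} ∈ proj a b c P ↔ ∃ p ∈ P, a ∉ p ∧ b ∈ p ∧ c ∈ p := by
  simp only [proj, Finset.mem_image, Finset.mem_filter]
  constructor
  · rintro ⟨p, ⟨hp, h2⟩, he⟩
    rcases trip_card_two hab hbc (hP.1 p hp).1 h2 with h | h
    · rw [h.2.2.2] at he
      exact absurd he (by decide)
    · exact ⟨p, hp, h.1, h.2.1, h.2.2.1⟩
  · rintro ⟨p, hp, ha, hb, hc⟩
    have he : trip a b c p = {1, 2} := by simp [trip, ha, hb, hc]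
    exact ⟨p, ⟨hp, by rw [he]; decide⟩, he⟩

lemma isParenWord_proj {m : ℕ} {a b c : Fin m} (hab : a < b) (hbc : b < c)
    {P : Finset (Finset (Fin m))} (hP : IsParenWord m P) : IsParenWord 3 (proj a b c P) := by
  have key : ∀ t ∈ proj a b c P, t = {0, 1} ∨ t = {1, 2} := by
    intro t ht
    simp only [proj, Finset.mem_image, Finset.mem_filter] at ht
    obtain ⟨p, ⟨hp, h2⟩, rfl⟩ := ht
    rcases trip_card_two hab hbc (hP.1 p hp).1 h2 with h | h
    · exact Or.inl h.2.2.2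
    · exact Or.inr h.2.2.2
  have not_both : {0, 1} ∈ proj a b c P → {1, 2} ∈ proj a b c P → False := by
    rw [mem_proj_left hab hbc hP, mem_proj_right hab hbc hP]
    rintro ⟨p, hp, hpa, hpb, hpc⟩ ⟨q, hq, hqa, hqb, hqc⟩
    rcases hP.2 hp hq with h | h | h
    · exact hqa (h hpa)
    · exact hpc (h hqc)
    · exact Finset.disjoint_left.1 h hpb hqb
  refine ⟨fun t ht => ?_, fun s hs t ht => ?_⟩
  · rcases key t ht with rfl | rfl
    · exact ⟨by unfold IsInterval; decide, by decide, by decide⟩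
    · exact ⟨by unfold IsInterval; decide, by decide, by decide⟩
  · rcases key s hs with rfl | rfl <;> rcases key t ht with rfl | rfl
    · exact Or.inl (Finset.Subset.refl _)
    · exact (not_both hs ht).elim
    · exact (not_both ht hs).elim
    · exact Or.inl (Finset.Subset.refl _)

lemma proj_mono {m : ℕ} (a b c : Fin m) {P Q : Finset (Finset (Fin m))} (h : Q ⊆ P) :
    proj a b c Q ⊆ proj a b c P :=
  Finset.image_subset_image (Finset.filter_subset_filter _ h)

/-- A point outside a parenthesis `q` of `Q` is separated from `q` by a parenthesis of `P`,
as seen on the triple formed by that point and the endpoints of `q`. -/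
lemma exists_superset_notMem {m : ℕ} {P Q : Finset (Finset (Fin m))} (hP : IsParenWord m P)
    (hQ : IsParenWord m Q)
    (h : ∀ a b c : Fin m, a < b → b < c → proj a b c Q ⊆ proj a b c P)
    {q : Finset (Fin m)} (hq : q ∈ Q) {x : Fin m} (hx : x ∉ q) :
    ∃ p ∈ P, q ⊆ p ∧ x ∉ p := by
  obtain ⟨hint, hcard, -⟩ := hQ.1 q hq
  have hne : q.Nonempty := Finset.card_pos.1 (by omega)
  have hi := q.min'_mem hne
  have hj := q.max'_mem hne
  have hij : q.min' hne < q.max' hne := Finset.min'_lt_max'_of_card q (by omega)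
  have hsub : ∀ p ∈ P, q.min' hne ∈ p → q.max' hne ∈ p → q ⊆ p := fun p hp h1 h2 y hy =>
    (hP.1 p hp).1 h1 h2 (q.min'_le y hy) (q.le_max' y hy)
  rcases lt_or_ge x (q.min' hne) with hlt | hge
  · obtain ⟨p, hp, hxp, h1, h2⟩ := (mem_proj_right hlt hij hP).1
      (h _ _ _ hlt hij ((mem_proj_right hlt hij hQ).2 ⟨q, hq, hx, hi, hj⟩))
    exact ⟨p, hp, hsub p hp h1 h2, hxp⟩
  · have hgt : q.max' hne < x := lt_of_not_ge fun hle => hx (hint hi hj hge hle)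
    obtain ⟨p, hp, h1, h2, hxp⟩ := (mem_proj_left hij hgt hP).1
      (h _ _ _ hij hgt ((mem_proj_left hij hgt hQ).2 ⟨q, hq, hi, hj, hx⟩))
    exact ⟨p, hp, hsub p hp h1 h2, hxp⟩

/-- Every `q ∈ Q` is the smallest member of `P` containing `q`. -/
lemma mem_of_proj_subset {m : ℕ} {P Q : Finset (Finset (Fin m))} (hP : IsParenWord m P)
    (hQ : IsParenWord m Q)
    (h : ∀ a b c : Fin m, a < b → b < c → proj a b c Q ⊆ proj a b c P) : Q ⊆ P := by
  intro q hq
  obtain ⟨-, hcard, hlt⟩ := hQ.1 q hq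
  obtain ⟨y, hy⟩ : q.Nonempty := Finset.card_pos.1 (by omega)
  -- `q` is not all of `W_m`, so at least one member of `P` contains `q`.
  obtain ⟨x, hx⟩ : ∃ x, x ∉ q := by
    by_contra! hall
    rw [Finset.eq_univ_iff_forall.2 hall, Finset.card_univ, Fintype.card_fin] at hlt
    exact lt_irrefl _ hlt
  obtain ⟨p₀, hp₀, hqp₀, -⟩ := exists_superset_notMem hP hQ h hq hx
  obtain ⟨p, hp, hmin⟩ := (P.filter (q ⊆ ·)).exists_min_image Finset.card
    ⟨p₀, Finset.mem_filter.2 ⟨hp₀, hqp₀⟩⟩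
  obtain ⟨hpP, hqp⟩ := Finset.mem_filter.1 hp
  have hpq : p ⊆ q := by
    intro z hzp
    by_contra hzq
    obtain ⟨r, hrP, hqr, hzr⟩ := exists_superset_notMem hP hQ h hq hzq
    rcases hP.2 hpP hrP with hs | hs | hs
    · exact hzr (hs hzp)
    -- `r ⊆ p` contradicts minimality, as `z` lies in `p` but not in `r`.
    · have hss : r ⊂ p := Finset.ssubset_iff_subset_ne.2 ⟨hs, fun e => hzr (e ▸ hzp)⟩
      exact absurd (hmin r (Finset.mem_filter.2 ⟨hrP, hqr⟩))
        (not_le.2 (Finset.card_lt_card hss))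
    · exact Finset.disjoint_left.1 hs (hqp hy) (hqr hy)
  exact hqp.antisymm hpq ▸ hpP

/-- The projections `π_{a,b,c}` are well defined (land in `𝔎_3`),
and together they give a full order embedding of `𝔎_m` into the product poset
`∏_{a<b<c} 𝔎_3`: the combined map is injective, and `P ≤ Q` in `𝔎_m` iff
`π_{a,b,c}(P) ≤ π_{a,b,c}(Q)` in `𝔎_3` (i.e. `π_{a,b,c}(Q) ⊆ π_{a,b,c}(P)`)
for every triple `a < b < c`. -/
theorem proj_embedding (m : ℕ) :
    (∀ a b c : Fin m, a < b → b < c → ∀ P : KWord m, IsParenWord 3 (proj a b c P.1)) ∧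
    (∀ P Q : KWord m,
      (∀ a b c : Fin m, a < b → b < c → proj a b c P.1 = proj a b c Q.1) → P = Q) ∧
    (∀ P Q : KWord m, P ≤ Q ↔
      ∀ a b c : Fin m, a < b → b < c → proj a b c Q.1 ⊆ proj a b c P.1) := by
  exact ⟨fun a b c hab hbc P => isParenWord_proj hab hbc P.2,
    fun P Q h => Subtype.ext (Finset.Subset.antisymm
      (mem_of_proj_subset Q.2 P.2 fun a b c hab hbc => (h a b c hab hbc).subset)
      (mem_of_proj_subset P.2 Q.2 fun a b c hab hbc => (h a b c hab hbc).symm.subset)),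
    fun P Q => ⟨fun h a b c _ _ => proj_mono a b c h, fun h => mem_of_proj_subset P.2 Q.2 h⟩⟩
end

section
/- Let m ≥ 2 and let T be a fully parenthesized (binary) word on W_m. Then the fiber rc^{-1}{T} = { P ∈ 𝔎_m : rc(P) = T } of the right-comb completion map over T is a subposet of 𝔎_m possessing both a least and a greatest element. Its least element is T itself, and its greatest element is { p ∈ T : max(p) < max(q), where q is the smallest block of T (with W_m counted as a block) strictly containing p }, i.e. T with all intervals deleted whose maximum coincides with the maximum of the smallest block strictly containing them. -/
/-- The blocks of `P`: the members of `P` together with the full interval `W_m`. -/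
def blocks {m : ℕ} (P : Finset (Finset (Fin m))) : Finset (Finset (Fin m)) :=
  insert Finset.univ P

open scoped Classical in
/-- The children of a block `b`: the maximal members of `P` strictly contained in `b`,
together with the singletons of elements of `b` not lying in any member of `P`
strictly contained in `b`. -/
noncomputable def children {m : ℕ} (P : Finset (Finset (Fin m))) (b : Finset (Fin m)) :
    Finset (Finset (Fin m)) :=
  (P.filter fun p => p ⊂ b ∧ ∀ q ∈ P, q ⊂ b → p ⊆ q → p = q) ∪
    ((b.filter fun x => ∀ p ∈ P, p ⊂ b → x ∉ p).image fun x => {x})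

/-- The valence of a block: its number of children. -/
noncomputable def valence {m : ℕ} (P : Finset (Finset (Fin m))) (b : Finset (Fin m)) : ℕ :=
  (children P b).card

open scoped Classical in
/-- The right-comb completion `rc(P)`: adjoin to `P`, for each block `b` of `P` with
children `c₁ < c₂ < ⋯ < c_r` (listed left to right), the suffix intervals
`c_j ∪ c_{j+1} ∪ ⋯ ∪ c_r` for `2 ≤ j ≤ r - 1`, i.e. for each child `c` which is
neither the first nor the last child of `b`, the set of elements of `b` that are
`≥ min c`. -/
noncomputable def rc {m : ℕ} (P : Finset (Finset (Fin m))) : Finset (Finset (Fin m)) :=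
  P ∪ (blocks P).biUnion fun b =>
    ((children P b).filter fun c =>
        (∃ c' ∈ children P b, ∃ x ∈ c', ∀ y ∈ c, x < y) ∧
        (∃ c' ∈ children P b, ∃ x ∈ c', ∀ y ∈ c, y < x)).image
      fun c => b.filter fun x => ∃ y ∈ c, y ≤ x

open scoped Classical in
/-- `T` with all intervals deleted whose maximum coincides with the maximum of the
smallest block of `T` strictly containing them (the claimed greatest element of the
fiber of `rc` over `T`). -/
noncomputable def maxFiber {m : ℕ} (T : Finset (Finset (Fin m))) : Finset (Finset (Fin m)) :=
  T.filter fun p => ∀ q ∈ blocks T, p ⊂ q → (∀ r ∈ blocks T, p ⊂ r → q ⊆ r) →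
    ∃ y ∈ q, ∀ x ∈ p, x < y

section Aux

variable {m : ℕ} {P T : Finset (Finset (Fin m))} {b c d e p q : Finset (Fin m)}

/-! ### Blocks and children -/

theorem mem_blocks : b ∈ blocks P ↔ b = Finset.univ ∨ b ∈ P := by
  simp [blocks]

theorem mem_children : c ∈ children P b ↔
    (c ∈ P ∧ c ⊂ b ∧ ∀ q ∈ P, q ⊂ b → c ⊆ q → c = q) ∨
      ∃ x ∈ b, (∀ p ∈ P, p ⊂ b → x ∉ p) ∧ c = {x} := by
  simp only [children, Finset.mem_union, Finset.mem_filter, Finset.mem_image]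
  constructor
  · rintro (h | ⟨x, ⟨h1, h2⟩, h3⟩)
    · exact Or.inl h
    · exact Or.inr ⟨x, h1, h2, h3.symm⟩
  · rintro (h | ⟨x, h1, h2, h3⟩)
    · exact Or.inl h
    · exact Or.inr ⟨x, ⟨h1, h2⟩, h3.symm⟩

theorem mem_rc : p ∈ rc P ↔ p ∈ P ∨ ∃ b ∈ blocks P, ∃ c ∈ children P b,
    (∃ c' ∈ children P b, ∃ x ∈ c', ∀ y ∈ c, x < y) ∧
    (∃ c' ∈ children P b, ∃ x ∈ c', ∀ y ∈ c, y < x) ∧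
    ∀ x, x ∈ p ↔ x ∈ b ∧ ∃ y ∈ c, y ≤ x := by
  simp only [rc, Finset.mem_union, Finset.mem_biUnion, Finset.mem_image, Finset.mem_filter]
  refine or_congr_right (exists_congr fun b => and_congr_right fun _ => exists_congr fun c => ?_)
  rw [and_assoc, and_assoc]
  refine and_congr_right fun _ => and_congr_right fun _ => and_congr_right fun _ => ?_
  rw [eq_comm, Finset.ext_iff]
  simp only [Finset.mem_filter]

theorem ssubset_univ_of_mem (hP : IsParenWord m P) (hp : p ∈ P) : p ⊂ Finset.univ := by
  refine Finset.ssubset_univ_iff.mpr fun h => ?_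
  have := (hP.1 p hp).2.2
  simp [h] at this

theorem block_interval (hP : IsParenWord m P) (hb : b ∈ blocks P) : IsInterval b := by
  rcases mem_blocks.mp hb with rfl | hb
  · intro x y z _ _ _ _
    exact Finset.mem_univ y
  · exact (hP.1 b hb).1

theorem two_le_card_block (hm : 2 ≤ m) (hP : IsParenWord m P) (hb : b ∈ blocks P) :
    2 ≤ b.card := by
  rcases mem_blocks.mp hb with rfl | hb
  · simpa using hm
  · exact (hP.1 b hb).2.1

theorem mem_of_block_ssubset (hb : b ∈ blocks P) (h : b ⊂ q) : b ∈ P := by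
  rcases mem_blocks.mp hb with rfl | hb
  · exact absurd (Finset.subset_univ q) h.2
  · exact hb

theorem block_nested (hP : IsParenWord m P) (hb : b ∈ blocks P) (hq : q ∈ blocks P)
    {x : Fin m} (hxb : x ∈ b) (hxq : x ∈ q) : b ⊆ q ∨ q ⊆ b := by
  rcases mem_blocks.mp hb with rfl | hb
  · exact Or.inr (Finset.subset_univ q)
  rcases mem_blocks.mp hq with rfl | hq
  · exact Or.inl (Finset.subset_univ b)
  rcases hP.2 hb hq with h | h | h
  · exact Or.inl h
  · exact Or.inr h
  · exact absurd hxq (Finset.disjoint_left.mp h hxb)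

theorem singleton_ssubset (hb : 2 ≤ b.card) {x : Fin m} (hx : x ∈ b) : {x} ⊂ b := by
  refine ⟨Finset.singleton_subset_iff.mpr hx, fun h => ?_⟩
  have := Finset.card_le_card h
  simp at this
  omega

theorem child_subset (hc : c ∈ children P b) : c ⊆ b := by
  rcases mem_children.mp hc with ⟨_, h, _⟩ | ⟨x, hx, _, rfl⟩
  · exact h.1
  · exact Finset.singleton_subset_iff.mpr hx

theorem child_ssubset (hb : 2 ≤ b.card) (hc : c ∈ children P b) : c ⊂ b := by
  rcases mem_children.mp hc with ⟨_, h, _⟩ | ⟨x, hx, _, rfl⟩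
  · exact h
  · exact singleton_ssubset hb hx

theorem child_interval (hP : IsParenWord m P) (hc : c ∈ children P b) : IsInterval c := by
  rcases mem_children.mp hc with ⟨h, _⟩ | ⟨x, hx, _, rfl⟩
  · exact (hP.1 c h).1
  · intro u v w hu hw huv hvw
    simp only [Finset.mem_singleton] at *
    subst hu hw
    exact le_antisymm hvw huv

theorem child_nonempty (hP : IsParenWord m P) (hc : c ∈ children P b) : c.Nonempty := by
  rcases mem_children.mp hc with ⟨h, _⟩ | ⟨x, hx, _, rfl⟩
  · have := (hP.1 c h).2.1
    exact Finset.card_pos.mp (by omega)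
  · exact Finset.singleton_nonempty x

/-- Distinct children of a block are disjoint. -/
theorem child_eq_of_mem (hP : IsParenWord m P) (hc : c ∈ children P b) (hd : d ∈ children P b)
    {x : Fin m} (hxc : x ∈ c) (hxd : x ∈ d) : c = d := by
  rcases mem_children.mp hc with ⟨hcP, hcb, hcmax⟩ | ⟨u, hu, hu', rfl⟩ <;>
  rcases mem_children.mp hd with ⟨hdP, hdb, hdmax⟩ | ⟨v, hv, hv', rfl⟩
  · rcases hP.2 hcP hdP with h | h | h
    · exact hcmax d hdP hdb h
    · exact (hdmax c hcP hcb h).symm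
    · exact absurd hxd (Finset.disjoint_left.mp h hxc)
  · rw [Finset.mem_singleton.mp hxd] at hxc
    exact absurd hxc (hv' c hcP hcb)
  · rw [Finset.mem_singleton.mp hxc] at hxd
    exact absurd hxd (hu' d hdP hdb)
  · rw [← Finset.mem_singleton.mp hxc, ← Finset.mem_singleton.mp hxd]

theorem exists_child_of_mem_word (hc : c ∈ P) (hcb : c ⊂ b) : ∃ d ∈ children P b, c ⊆ d := by
  classical
  obtain ⟨d, hd, hmax⟩ := Finset.exists_max_image (P.filter fun d => c ⊆ d ∧ d ⊂ b) Finset.card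
    ⟨c, Finset.mem_filter.mpr ⟨hc, Finset.Subset.refl c, hcb⟩⟩
  obtain ⟨hdP, hcd, hdb⟩ := Finset.mem_filter.mp hd
  refine ⟨d, mem_children.mpr (Or.inl ⟨hdP, hdb, fun q hq hqb hdq => ?_⟩), hcd⟩
  exact Finset.eq_of_subset_of_card_le hdq
    (hmax q (Finset.mem_filter.mpr ⟨hq, hcd.trans hdq, hqb⟩))

theorem exists_child_of_mem {x : Fin m} (hx : x ∈ b) : ∃ d ∈ children P b, x ∈ d := by
  by_cases h : ∃ p ∈ P, p ⊂ b ∧ x ∈ p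
  · obtain ⟨p, hp, hpb, hxp⟩ := h
    obtain ⟨d, hd, hpd⟩ := exists_child_of_mem_word hp hpb
    exact ⟨d, hd, hpd hxp⟩
  · push Not at h
    exact ⟨{x}, mem_children.mpr (Or.inr ⟨x, hx, h, rfl⟩), Finset.mem_singleton_self x⟩

/-- A nonempty proper subset of a block `b` has a smallest block of `P` strictly containing it, since the blocks
containing it form a chain. -/
theorem exists_parent (hP : IsParenWord m P) (hp : p.Nonempty) (hb : b ∈ blocks P) (hpb : p ⊂ b) :
    ∃ q ∈ blocks P, p ⊂ q ∧ ∀ r ∈ blocks P, p ⊂ r → q ⊆ r := by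
  classical
  obtain ⟨x, hx⟩ := hp
  obtain ⟨q, hq, hmin⟩ := Finset.exists_min_image ((blocks P).filter fun d => p ⊂ d) Finset.card
    ⟨b, Finset.mem_filter.mpr ⟨hb, hpb⟩⟩
  obtain ⟨hqP, hpq⟩ := Finset.mem_filter.mp hq
  refine ⟨q, hqP, hpq, fun r hr hpr => ?_⟩
  rcases block_nested hP hqP hr (hpq.1 hx) (hpr.1 hx) with h | h
  · exact h
  · exact (Finset.eq_of_subset_of_card_le h
      (hmin r (Finset.mem_filter.mpr ⟨hr, hpr⟩))).symm.subset

theorem isParenWord_subset (hP : IsParenWord m P) (h : T ⊆ P) : IsParenWord m T :=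
  ⟨fun p hp => hP.1 p (h hp), fun _ hp _ hq => hP.2 (h hp) (h hq)⟩

/-! ### Binary words are fixed -/

/-- A block of valence two has no middle child, so `rc` adjoins nothing to a binary word. -/
theorem rc_subset_of_binary (hP : IsParenWord m P) (hbin : ∀ b ∈ blocks P, valence P b = 2) :
    rc P ⊆ P := by
  intro p hp
  rcases mem_rc.mp hp with h | ⟨b, hb, c, hc, ⟨c₁, hc₁, x, hx, hxc⟩, ⟨c₂, hc₂, z, hz, hcz⟩, -⟩
  · exact h
  exfalso
  obtain ⟨y, hy⟩ := child_nonempty hP hc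
  have h₁ : c₁ ≠ c := by
    rintro rfl
    exact lt_irrefl x (hxc x hx)
  have h₂ : c₂ ≠ c := by
    rintro rfl
    exact lt_irrefl z (hcz z hz)
  have h₁₂ : c₁ ≠ c₂ := by
    rintro rfl
    have hyc₁ := child_interval hP hc₁ hx hz (hxc y hy).le (hcz y hy).le
    exact h₁ (child_eq_of_mem hP hc₁ hc hyc₁ hy)
  have h3 : ({c₁, c, c₂} : Finset (Finset (Fin m))).card = 3 :=
    Finset.card_eq_three.mpr ⟨c₁, c, c₂, h₁, h₁₂, h₂.symm, rfl⟩
  have hsub : ({c₁, c, c₂} : Finset (Finset (Fin m))) ⊆ children P b := by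
    intro u hu
    simp only [Finset.mem_insert, Finset.mem_singleton] at hu
    rcases hu with rfl | rfl | rfl <;> assumption
  have hle := Finset.card_le_card hsub
  have hval := hbin b hb
  rw [valence] at hval
  omega

/-! ### The greatest element of the fiber -/

theorem mem_maxFiber : p ∈ maxFiber T ↔ p ∈ T ∧
    ∀ q ∈ blocks T, p ⊂ q → (∀ r ∈ blocks T, p ⊂ r → q ⊆ r) → ∃ y ∈ q, ∀ x ∈ p, x < y := by
  simp only [maxFiber, Finset.mem_filter]

theorem maxFiber_subset : maxFiber T ⊆ T := fun _ hp => (mem_maxFiber.mp hp).1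

theorem mem_blocks_of_mem_blocks_maxFiber (hb : b ∈ blocks (maxFiber T)) : b ∈ blocks T :=
  mem_blocks.mpr ((mem_blocks.mp hb).imp_right fun h => maxFiber_subset h)

theorem maxFiber_subset_of_rc_eq (hT : IsParenWord m T) (h : rc P = T) : maxFiber T ⊆ P := by
  intro p hp
  obtain ⟨hpT, hmax⟩ := mem_maxFiber.mp hp
  rcases mem_rc.mp (h ▸ hpT : p ∈ rc P) with h' | ⟨b, hb, c, hc, ⟨c₁, hc₁, x, hx, hxc⟩, -, hpe⟩
  · exact h'
  exfalso
  have hbT : b ∈ blocks T :=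
    mem_blocks.mpr ((mem_blocks.mp hb).imp_right fun hbP => h ▸ mem_rc.mpr (Or.inl hbP))
  have hpb : p ⊂ b := by
    refine ⟨fun u hu => ((hpe u).mp hu).1, fun hbp => ?_⟩
    obtain ⟨-, y, hy, hyx⟩ := (hpe x).mp (hbp (child_subset hc₁ hx))
    exact absurd (hxc y hy) (not_lt.mpr hyx)
  obtain ⟨w, hw⟩ : p.Nonempty := by
    have := (hT.1 p hpT).2.1
    exact Finset.card_pos.mp (by omega)
  obtain ⟨q, hq, hpq, hmin⟩ := exists_parent hT ⟨w, hw⟩ hbT hpb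
  obtain ⟨y, hyq, hy⟩ := hmax q hq hpq hmin
  -- `y` lies in `b` to the right of `p`, but `p` is a suffix of `b`.
  obtain ⟨-, v, hv, hvw⟩ := (hpe w).mp hw
  exact lt_irrefl y (hy y ((hpe y).mpr ⟨hmin b hbT hpb hyq, v, hv, hvw.trans (hy w hw).le⟩))

/-- If no member of `maxFiber T` lies between `p` and a block `b` strictly containing `p`, then `p`
reaches up to the maximum of `b`: passing from an interval outside `maxFiber T` to its parent does
not change the maximum. -/
theorem isSuffix_of_gap (hb : b ∈ blocks T) :
    ∀ p ∈ T, p ⊂ b → (∀ q ∈ maxFiber T, p ⊆ q → ¬ q ⊂ b) → ∀ y ∈ b, ∃ x ∈ p, y ≤ x := by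
  suffices H : ∀ n : ℕ, ∀ p ∈ T, b.card - p.card = n → p ⊂ b →
      (∀ q ∈ maxFiber T, p ⊆ q → ¬ q ⊂ b) → ∀ y ∈ b, ∃ x ∈ p, y ≤ x from
    fun p hp => H _ p hp rfl
  intro n
  induction n using Nat.strong_induction_on with
  | _ n ih =>
    intro p hp hn hpb hgap y hy
    have hpM : p ∉ maxFiber T := fun h => hgap p h (Finset.Subset.refl p) hpb
    rw [mem_maxFiber] at hpM
    push Not at hpM
    obtain ⟨q, hq, hpq, hmin, hend⟩ := hpM hp
    have hqb := hmin b hb hpb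
    rcases hqb.eq_or_ssubset with rfl | hqb'
    · exact hend y hy
    · have h1 := Finset.card_lt_card hpq
      have h2 := Finset.card_lt_card hqb'
      obtain ⟨x, hx, hyx⟩ := ih (b.card - q.card) (by omega) q (mem_of_block_ssubset hq hqb') rfl
        hqb' (fun r hr hqr => hgap r hr (hpq.1.trans hqr)) y hy
      obtain ⟨w, hw, hxw⟩ := hend x hx
      exact ⟨w, hw, hyx.trans hxw⟩

theorem subset_rc_maxFiber (hT : IsParenWord m T) : T ⊆ rc (maxFiber T) := by
  intro p hp
  by_cases hpM : p ∈ maxFiber T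
  · exact mem_rc.mpr (Or.inl hpM)
  have hM : IsParenWord m (maxFiber T) := isParenWord_subset hT maxFiber_subset
  obtain ⟨hpi, hp2, -⟩ := hT.1 p hp
  have hpne : p.Nonempty := Finset.card_pos.mp (by omega)
  obtain ⟨b, hb, hpb, hmin⟩ := exists_parent hM hpne
    (mem_blocks.mpr (Or.inl rfl)) (ssubset_univ_of_mem hT hp)
  have hgap : ∀ q ∈ maxFiber T, p ⊆ q → ¬ q ⊂ b := by
    intro q hq hpq hqb
    have hpq' : p ⊂ q := hpq.ssubset_of_ne fun h => hpM (h ▸ hq)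
    exact hqb.2 (hmin q (mem_blocks.mpr (Or.inr hq)) hpq')
  have hend := isSuffix_of_gap (mem_blocks_of_mem_blocks_maxFiber hb) p hp hpb hgap
  set a := p.min' hpne with ha
  have hap : a ∈ p := p.min'_mem hpne
  have hle : ∀ x ∈ p, a ≤ x := fun x hx => p.min'_le x hx
  obtain ⟨c, hc, hac⟩ := exists_child_of_mem (P := maxFiber T) (hpb.1 hap)
  have hcp : c ⊂ p := by
    rcases mem_children.mp hc with ⟨hcM, hcb, -⟩ | ⟨x, -, -, rfl⟩
    · rcases block_nested hT (mem_blocks.mpr (Or.inr (maxFiber_subset hcM)))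
        (mem_blocks.mpr (Or.inr hp)) hac hap with h | h
      · exact h.ssubset_of_ne fun h' => hpM (h' ▸ hcM)
      · exact absurd hcb (hgap c hcM h)
    · rw [← Finset.mem_singleton.mp hac]
      exact singleton_ssubset hp2 hap
  refine mem_rc.mpr (Or.inr ⟨b, hb, c, hc, ?_, ?_, fun x => ⟨fun hx => ?_, ?_⟩⟩)
  · obtain ⟨x, hxb, hxp⟩ := Finset.exists_of_ssubset hpb
    obtain ⟨c', hc', hxc'⟩ := exists_child_of_mem (P := maxFiber T) hxb
    refine ⟨c', hc', x, hxc', fun y hy => lt_of_lt_of_le ?_ (hle y (hcp.1 hy))⟩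
    by_contra hax
    obtain ⟨w, hw, hxw⟩ := hend x hxb
    exact hxp (hpi hap hw (not_lt.mp hax) hxw)
  · obtain ⟨x, hxp, hxc⟩ := Finset.exists_of_ssubset hcp
    obtain ⟨c', hc', hxc'⟩ := exists_child_of_mem (P := maxFiber T) (hpb.1 hxp)
    refine ⟨c', hc', x, hxc', fun y hy => ?_⟩
    by_contra hyx
    exact hxc (child_interval hM hc hac hy (hle x hxp) (not_lt.mp hyx))
  · exact ⟨hpb.1 hx, a, hac, hle x hx⟩
  · rintro ⟨hxb, y, hy, hyx⟩
    obtain ⟨w, hw, hxw⟩ := hend x hxb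
    exact hpi (hcp.1 hy) hw hyx hxw

theorem rc_maxFiber_subset (hm : 2 ≤ m) (hT : IsParenWord m T)
    (hbin : ∀ b ∈ blocks T, valence T b = 2) : rc (maxFiber T) ⊆ T := by
  classical
  intro p hp
  rcases mem_rc.mp hp with h | ⟨b, hb, c, hc, ⟨c₁, hc₁, x, hx, hxc⟩, ⟨c₂, hc₂, w, hw, hcw⟩, hpe⟩
  · exact maxFiber_subset h
  have hM : IsParenWord m (maxFiber T) := isParenWord_subset hT maxFiber_subset
  have hbT := mem_blocks_of_mem_blocks_maxFiber hb
  obtain ⟨a, ha⟩ := child_nonempty hM hc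
  obtain ⟨q, hq, hqmin⟩ := Finset.exists_min_image
    ((blocks T).filter fun q => c ⊆ q ∧ q ⊆ b ∧ ∀ u ∈ q, ∀ v ∈ b, u ≤ v → v ∈ q) Finset.card
    ⟨b, Finset.mem_filter.mpr
      ⟨hbT, child_subset hc, Finset.Subset.refl b, fun _ _ _ hv _ => hv⟩⟩
  obtain ⟨hqT, hcq, hqb, hqup⟩ := Finset.mem_filter.mp hq
  have hpq : p ⊆ q := by
    intro u hu
    obtain ⟨hub, v, hv, hvu⟩ := (hpe u).mp hu
    exact hqup v (hcq hv) u hub hvu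
  suffices hqp : q ⊆ p by
    have hpqe : p = q := hpq.antisymm hqp
    rw [hpqe]
    rcases mem_blocks.mp hqT with hu | h
    · -- `p` omits the element `x` of the child to the left of `c`.
      have hxp : x ∈ p := by rw [hpqe, hu]; exact Finset.mem_univ x
      obtain ⟨-, y, hy, hyx⟩ := (hpe x).mp hxp
      exact absurd (hxc y hy) (not_lt.mpr hyx)
    · exact h
  intro z hzq
  by_contra hzp
  have hzc : ∀ y ∈ c, z < y := fun y hy => by
    by_contra hzy
    exact hzp ((hpe z).mpr ⟨hqb hzq, y, hy, not_lt.mp hzy⟩)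
  have hq2 := two_le_card_block hm hT hqT
  have hzc' : z ∉ c := fun h => lt_irrefl z (hzc z h)
  obtain ⟨d, hd, hcd⟩ : ∃ d ∈ children T q, c ⊆ d := by
    rcases mem_children.mp hc with ⟨hcM, -, -⟩ | ⟨t, -, -, rfl⟩
    · exact exists_child_of_mem_word (maxFiber_subset hcM) ⟨hcq, fun h => hzc' (h hzq)⟩
    · obtain ⟨d, hd, htd⟩ := exists_child_of_mem (P := T) (hcq ha)
      exact ⟨d, hd, Finset.singleton_subset_iff.mpr (Finset.mem_singleton.mp ha ▸ htd)⟩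
  have hdq := child_ssubset hq2 hd
  by_cases hup : ∀ u ∈ d, ∀ v ∈ q, u ≤ v → v ∈ d
  · -- Here `d` is the right child of `q`.
    rcases mem_children.mp hd with ⟨hdT, -, -⟩ | ⟨t, -, -, rfl⟩
    · have := hqmin d (Finset.mem_filter.mpr ⟨mem_blocks.mpr (Or.inr hdT), hcd, hdq.1.trans hqb,
        fun u hu v hv huv => hup u hu v (hqup u (hdq.1 hu) v hv huv) huv⟩)
      exact absurd (Finset.card_lt_card hdq) (not_lt.mpr this)
    · have hwq := hqup a (hcq ha) w (child_subset hc₂ hw) (hcw a ha).le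
      have hwt := hup a (hcd ha) w hwq (hcw a ha).le
      have hlt := hcw a ha
      rw [Finset.mem_singleton.mp hwt, Finset.mem_singleton.mp (hcd ha)] at hlt
      exact lt_irrefl _ hlt
  · -- Here `d` is the left child of `q`, with `y` in the right child.
    push Not at hup
    obtain ⟨u, hu, y, hyq, huy, hyd⟩ := hup
    have hdy : ∀ v ∈ d, v < y := fun v hv => by
      by_contra h
      exact hyd (child_interval hT hd hu hv huy (not_lt.mp h))
    have hzd : z ∈ d := by
      by_contra hzd
      obtain ⟨e, he, hze⟩ := exists_child_of_mem (P := T) hzq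
      obtain ⟨f, hf, hyf⟩ := exists_child_of_mem (P := T) hyq
      have hed : e ≠ d := by
        rintro rfl
        exact hzd hze
      have hfd : f ≠ d := by
        rintro rfl
        exact hyd hyf
      have hef : e ≠ f := by
        rintro rfl
        have hae := child_interval hT he hze hyf (hzc a ha).le (hdy a (hcd ha)).le
        exact hed (child_eq_of_mem hT he hd hae (hcd ha))
      have h3 : ({e, d, f} : Finset (Finset (Fin m))).card = 3 :=
        Finset.card_eq_three.mpr ⟨e, d, f, hed, hef, hfd.symm, rfl⟩
      have hsub : ({e, d, f} : Finset (Finset (Fin m))) ⊆ children T q := by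
        intro v hv
        simp only [Finset.mem_insert, Finset.mem_singleton] at hv
        rcases hv with rfl | rfl | rfl <;> assumption
      have hle := Finset.card_le_card hsub
      have hval := hbin q hqT
      rw [valence] at hval
      omega
    have hdM : d ∈ maxFiber T := by
      rcases mem_children.mp hd with ⟨hdT, -, hdmax⟩ | ⟨t, -, -, rfl⟩
      · refine mem_maxFiber.mpr ⟨hdT, fun r hr hdr hrmin => ⟨y, ?_, hdy⟩⟩
        rcases (hrmin q hqT hdq).eq_or_ssubset with rfl | hrq
        · exact hyq
        · exact absurd (hdmax r (mem_of_block_ssubset hr hrq) hrq hdr.1) hdr.ne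
      · have hlt := hzc a ha
        rw [Finset.mem_singleton.mp hzd, Finset.mem_singleton.mp (hcd ha)] at hlt
        exact absurd hlt (lt_irrefl _)
    have hdb : d ⊂ b := lt_of_lt_of_le hdq hqb
    rcases mem_children.mp hc with ⟨-, -, hcmax⟩ | ⟨t, -, ht, rfl⟩
    · exact hzc' ((hcmax d hdM hdb hcd) ▸ hzd)
    · exact ht d hdM hdb (hcd (Finset.mem_singleton_self t))

end Aux

/-- Let `m ≥ 2` and let `T ∈ 𝔎_m` be fully parenthesized (every
block of valence exactly `2`).  Then the fiber of the right-comb completion `rc`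
over `T` is a subposet of `𝔎_m` with a least and a greatest element: its least
element is `T` itself (in particular `rc T = T`, and every member `P` of the fiber
satisfies `T ≤ P`, i.e. `P ⊆ T`), and its greatest element is `maxFiber T`, the word
obtained from `T` by deleting all intervals whose maximum coincides with the maximum
of the smallest block strictly containing them. -/
theorem rc_fiber_least_greatest (m : ℕ) (hm : 2 ≤ m) (T : KWord m)
    (hT : ∀ b ∈ blocks T.1, valence T.1 b = 2) :
    rc T.1 = T.1 ∧
    (∀ P : KWord m, rc P.1 = T.1 → P.1 ⊆ T.1) ∧
    IsParenWord m (maxFiber T.1) ∧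
    rc (maxFiber T.1) = T.1 ∧
    (∀ P : KWord m, rc P.1 = T.1 → maxFiber T.1 ⊆ P.1) := by
  have hrc : ∀ P : Finset (Finset (Fin m)), P ⊆ rc P := fun P p hp => mem_rc.mpr (Or.inl hp)
  exact ⟨(rc_subset_of_binary T.2 hT).antisymm (hrc T.1), fun P h => h ▸ hrc P.1,
    isParenWord_subset T.2 maxFiber_subset,
    (rc_maxFiber_subset hm T.2 hT).antisymm (subset_rc_maxFiber T.2),
    fun P h => maxFiber_subset_of_rc_eq T.2 h⟩
end
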